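/- Let X₀⁺ be a proper subshift of the one-sided full shift X⁺ = 𝒜^ℕ, and for i ≥ 0 set κ_i = 2^{−i} log |L_{2^i}(X₀⁺)| − h_top(X₀⁺). Let (a_j)_{j≥0} be a decreasing sequence of positive reals converging to 0 that satisfies a_{3j} ≥ (2 log j)/j + (1/j) Σ_{i=0}^{⌊log₂ j⌋} 2^i κ_i + 1/j for all j ≥ 1, and define φ⁺ : X⁺ → ℝ by φ⁺(x) = 0 if x ∈ X₀⁺ and φ⁺(x) = −a_j if dist(x, X₀⁺) = 2^{−j}. Then φ⁺ has a freezing phase transition at some β_c > 0, and ZTA(φ⁺) coincides with the set of measures of maximal entropy on X₀⁺. -/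

import Mathlib

open MeasureTheory Filter Topology
open scoped ENNReal Classical

namespace Freezing

/-- The one-sided configuration space `X⁺ = 𝒜^ℕ`. -/
abbrev Cfg1 (A : Type) : Type := ℕ → A

section Defs

variable {A : Type} [Fintype A] [TopologicalSpace A] [DiscreteTopology A]
  [MeasurableSpace A] [BorelSpace A]

/-- The one-sided shift `σ(x)_i = x_{i+1}`. -/
def shift1 (x : Cfg1 A) : Cfg1 A := fun i => x (i + 1)

/-- Shift-invariance of a measure. -/
def Invariant1 (μ : Measure (Cfg1 A)) : Prop := Measure.map shift1 μ = μ

/-- The cylinder set `[w]` of a word `w` of length `n`. -/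
def cyl1 (n : ℕ) (w : Fin n → A) : Set (Cfg1 A) := { x | ∀ i : Fin n, x i = w i }

/-- Measure-theoretic entropy `h(μ) = inf_{n ≥ 1} (1/n) Σ_w (-μ[w] log μ[w])`. -/
noncomputable def entropy1 (μ : Measure (Cfg1 A)) : ℝ :=
  ⨅ n : {n : ℕ // 1 ≤ n},
    (n.1 : ℝ)⁻¹ * ∑ w : Fin n.1 → A, Real.negMulLog (μ (cyl1 n.1 w)).toReal

/-- Pressure `p_φ(β) = sup { h(μ) + β ∫ φ dμ }` over shift-invariant probability measures. -/
noncomputable def pressure1 (φ : Cfg1 A → ℝ) (β : ℝ) : ℝ :=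
  sSup { r | ∃ μ : Measure (Cfg1 A), IsProbabilityMeasure μ ∧ Invariant1 μ ∧
    r = entropy1 μ + β * ∫ x, φ x ∂μ }

/-- The set of equilibrium states of `βφ`. -/
def ES1 (φ : Cfg1 A → ℝ) (β : ℝ) : Set (Measure (Cfg1 A)) :=
  { μ | IsProbabilityMeasure μ ∧ Invariant1 μ ∧
      entropy1 μ + β * ∫ x, φ x ∂μ = pressure1 φ β }

/-- `φ` has a freezing phase transition at `βc`. -/
def FreezingPT1 (φ : Cfg1 A → ℝ) (βc : ℝ) : Prop :=
  (∀ β β' : ℝ, βc < β → βc < β' → ES1 φ β = ES1 φ β') ∧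
  (∀ β β' : ℝ, β < βc → βc < β' → ES1 φ β ≠ ES1 φ β')

/-- The zero-temperature accumulation points of `φ`. -/
def ZTA1 (φ : Cfg1 A → ℝ) : Set (Measure (Cfg1 A)) :=
  { μ | IsProbabilityMeasure μ ∧ Invariant1 μ ∧
      ∃ (β : ℕ → ℝ) (μs : ℕ → Measure (Cfg1 A)),
        Tendsto β atTop atTop ∧ (∀ k, μs k ∈ ES1 φ (β k)) ∧
        ∀ f : Cfg1 A → ℝ, Continuous f →
          Tendsto (fun k => ∫ x, f x ∂(μs k)) atTop (𝓝 (∫ x, f x ∂μ)) }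

/-- A one-sided subshift: nonempty, closed, shift-invariant. -/
def IsSubshift1 (X₀ : Set (Cfg1 A)) : Prop :=
  X₀.Nonempty ∧ IsClosed X₀ ∧ ∀ x ∈ X₀, shift1 x ∈ X₀

/-- The language `L_n(X₀)`: words of length `n` appearing at the origin of points of `X₀`. -/
def lang1 (X₀ : Set (Cfg1 A)) (n : ℕ) : Set (Fin n → A) :=
  { w | ∃ x ∈ X₀, ∀ i : Fin n, x i = w i }

/-- Topological entropy `h_top(X₀) = inf_{n ≥ 1} (1/n) log |L_n(X₀)|`. -/
noncomputable def topEnt1 (X₀ : Set (Cfg1 A)) : ℝ :=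
  ⨅ n : {n : ℕ // 1 ≤ n}, (n.1 : ℝ)⁻¹ * Real.log ((lang1 X₀ n.1).ncard)

/-- A measure of maximal entropy on the subshift `X₀`. -/
def IsMME1 (X₀ : Set (Cfg1 A)) (μ : Measure (Cfg1 A)) : Prop :=
  IsProbabilityMeasure μ ∧ Invariant1 μ ∧ μ X₀ = 1 ∧ entropy1 μ = topEnt1 X₀

/-- The metric `dist(x,y) = 2^{-min{i : x_i ≠ y_i}}`. -/
noncomputable def dist1 (x y : Cfg1 A) : ℝ :=
  if x = y then 0 else (2 : ℝ) ^ (-((sInf { i : ℕ | x i ≠ y i } : ℕ) : ℤ))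

/-- Distance from a point to a subshift. -/
noncomputable def distToSub1 (X₀ : Set (Cfg1 A)) (x : Cfg1 A) : ℝ :=
  sInf { r | ∃ y ∈ X₀, r = dist1 x y }

/-- The (topological) support of a measure: points all of whose open neighbourhoods have
positive measure. -/
def supp1 (μ : Measure (Cfg1 A)) : Set (Cfg1 A) :=
  { x | ∀ U : Set (Cfg1 A), IsOpen U → x ∈ U → 0 < μ U }

end Defs

set_option linter.unusedSectionVars false

section P1

lemma gibbs {ι : Type*} [Fintype ι] (p q : ι → ℝ) (hp : ∀ i, 0 ≤ p i) (hq : ∀ i, 0 ≤ q i)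
    (hpq : ∀ i, q i = 0 → p i = 0) (hsum : ∑ i, p i = 1) (Z : ℝ) (hZ : ∑ i, q i ≤ Z) :
    ∑ i, Real.negMulLog (p i) + ∑ i, p i * Real.log (q i) ≤ Real.log Z := by
  have hZ0 : 0 < Z := by
    refine lt_of_lt_of_le ?_ hZ
    have h1 : 0 ≤ ∑ i, q i := Finset.sum_nonneg fun i _ => hq i
    rcases h1.lt_or_eq with h | h
    · exact h
    · exfalso
      have h2 := (Finset.sum_eq_zero_iff_of_nonneg fun i _ => hq i).1 h.symm
      have : ∑ i, p i = 0 := Finset.sum_eq_zero fun i hi => hpq i (h2 i hi)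
      linarith
  have key : ∀ i, Real.negMulLog (p i) + p i * Real.log (q i) - p i * Real.log Z
      ≤ q i / Z - p i := by
    intro i
    rcases (hp i).lt_or_eq with h | h
    · have hqi : 0 < q i := lt_of_le_of_ne (hq i) fun h0 => h.ne' (hpq i h0.symm)
      have h3 := Real.log_le_sub_one_of_pos (x := q i / (Z * p i)) (by positivity)
      rw [Real.log_div hqi.ne' (by positivity), Real.log_mul hZ0.ne' h.ne'] at h3
      have h4 := mul_le_mul_of_nonneg_left h3 h.le
      have h5 : p i * (q i / (Z * p i) - 1) = q i / Z - p i := by field_simp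
      rw [h5] at h4
      rw [Real.negMulLog]
      nlinarith
    · rw [← h]; simp; exact div_nonneg (hq i) hZ0.le
  have h6 := Finset.sum_le_sum fun i (_ : i ∈ Finset.univ) => key i
  simp only [Finset.sum_sub_distrib, Finset.sum_add_distrib, ← Finset.sum_mul, ← Finset.sum_div,
    hsum] at h6
  have : (∑ i, q i) / Z ≤ 1 := (div_le_one hZ0).2 hZ
  linarith

variable {A : Type} [Fintype A] [TopologicalSpace A] [DiscreteTopology A]
  [MeasurableSpace A] [BorelSpace A]

def blk (i k : ℕ) (x : Cfg1 A) : Fin k → A := fun t => x (i + t)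

lemma measurable_blk (i k : ℕ) : Measurable (blk (A := A) i k) :=
  measurable_pi_lambda _ fun _ => measurable_pi_apply _

lemma continuous_blk (i k : ℕ) : Continuous (blk (A := A) i k) :=
  continuous_pi fun _ => continuous_apply _

lemma cyl_eq (n : ℕ) (w : Fin n → A) : cyl1 n w = blk 0 n ⁻¹' {w} := by
  ext x; simp [cyl1, blk, funext_iff]

lemma meas_blk (i k : ℕ) (u : Fin k → A) : MeasurableSet (blk (A := A) i k ⁻¹' {u}) :=
  measurable_blk i k (measurableSet_singleton u)

noncomputable def HH (ν : Measure (Cfg1 A)) (i k : ℕ) : ℝ :=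
  ∑ u : Fin k → A, Real.negMulLog (ν.real (blk i k ⁻¹' {u}))

lemma entropy_eq (μ : Measure (Cfg1 A)) : entropy1 μ =
    ⨅ n : {n : ℕ // 1 ≤ n}, (n.1 : ℝ)⁻¹ * HH μ 0 n.1 := by
  simp only [entropy1, HH, cyl_eq]; rfl

lemma part_sum {S : Type*} [Fintype S] [MeasurableSpace S] [MeasurableSingletonClass S]
    {X : Type*} [MeasurableSpace X] (ν : Measure X) [IsFiniteMeasure ν] (T : X → S)
    (hT : Measurable T) (E : Set X) (hE : MeasurableSet E) :
    ∑ s, ν.real (E ∩ T ⁻¹' {s}) = ν.real E := by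
  rw [← measureReal_biUnion_finset]
  · congr 1; ext x; simp
  · intro s _ t _ hst
    refine Set.disjoint_left.2 fun x hx hx' => hst ?_
    simp at hx hx'; rw [← hx.2, hx'.2]
  · intro s _; exact hE.inter (hT (measurableSet_singleton s))

lemma part_sum_one (ν : Measure (Cfg1 A)) [IsProbabilityMeasure ν] (i k : ℕ) :
    ∑ u, ν.real (blk i k ⁻¹' {u}) = 1 := by
  have := part_sum ν (blk (A := A) i k) (measurable_blk i k) Set.univ MeasurableSet.univ
  simpa using this

lemma blk_append (i m n : ℕ) (u : Fin m → A) (v : Fin n → A) :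
    blk i (m + n) ⁻¹' {Fin.append u v} = blk i m ⁻¹' {u} ∩ blk (i + m) n ⁻¹' {v} := by
  ext x
  simp only [Set.mem_preimage, Set.mem_singleton_iff, Set.mem_inter_iff]
  constructor
  · intro h
    constructor
    · ext t
      have := congrFun h (Fin.castAdd n t)
      simpa [blk] using this
    · ext t
      have := congrFun h (Fin.natAdd m t)
      simpa [blk, add_assoc] using this
  · rintro ⟨rfl, rfl⟩
    ext t
    refine Fin.addCases (fun t => ?_) (fun t => ?_) t
    · simp [blk]
    · simp [blk, add_assoc]

lemma HH_nonneg (ν : Measure (Cfg1 A)) [IsProbabilityMeasure ν] (i k : ℕ) : 0 ≤ HH ν i k :=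
  Finset.sum_nonneg fun _ _ => Real.negMulLog_nonneg measureReal_nonneg measureReal_le_one

lemma HH_sub (ν : Measure (Cfg1 A)) [IsProbabilityMeasure ν] (i m n : ℕ) :
    HH ν i (m + n) ≤ HH ν i m + HH ν (i + m) n := by
  set P : (Fin m → A) → ℝ := fun u => ν.real (blk i m ⁻¹' {u}) with hP
  set Q : (Fin n → A) → ℝ := fun v => ν.real (blk (i + m) n ⁻¹' {v}) with hQ
  set R : (Fin m → A) × (Fin n → A) → ℝ :=
    fun z => ν.real (blk i m ⁻¹' {z.1} ∩ blk (i + m) n ⁻¹' {z.2}) with hR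
  have e1 : HH ν i (m + n) = ∑ z, Real.negMulLog (R z) := by
    rw [HH, ← (Fin.appendEquiv m n).sum_comp]
    refine Finset.sum_congr rfl fun z _ => ?_
    simp only [hR]; rw [← blk_append]; rfl
  have m1 : ∀ u, ∑ v, R (u, v) = P u := fun u =>
    part_sum ν _ (measurable_blk (i + m) n) _ (meas_blk i m u)
  have m2 : ∀ v, ∑ u, R (u, v) = Q v := fun v => by
    have := part_sum ν _ (measurable_blk i m) _ (meas_blk (i + m) n v)
    simp only [hR, hQ, Set.inter_comm] at *
    exact this
  have sP : ∑ u, P u = 1 := part_sum_one ν i m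
  have sQ : ∑ v, Q v = 1 := part_sum_one ν (i + m) n
  have R0 : ∀ z, 0 ≤ R z := fun z => measureReal_nonneg
  have P0 : ∀ z, 0 ≤ P z := fun z => measureReal_nonneg
  have Q0 : ∀ z, 0 ≤ Q z := fun z => measureReal_nonneg
  have RP : ∀ z, R z ≤ P z.1 := fun z => measureReal_mono Set.inter_subset_left
  have RQ : ∀ z, R z ≤ Q z.2 := fun z => measureReal_mono Set.inter_subset_right
  have g := gibbs R (fun z => P z.1 * Q z.2) R0 (fun z => mul_nonneg (P0 _) (Q0 _))
    (fun z hz => by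
      rcases mul_eq_zero.1 hz with h | h
      · exact le_antisymm (h ▸ RP z) (R0 z)
      · exact le_antisymm (h ▸ RQ z) (R0 z))
    (by rw [Fintype.sum_prod_type]; simp only [m1, sP]) 1
    (by rw [Fintype.sum_prod_type]; simp only [← Finset.mul_sum, sQ, mul_one, sP, le_refl])
  have e2 : ∀ z, R z * Real.log (P z.1 * Q z.2)
      = R z * Real.log (P z.1) + R z * Real.log (Q z.2) := by
    intro z
    rcases (R0 z).lt_or_eq with h | h
    · rw [Real.log_mul (h.trans_le (RP z)).ne' (h.trans_le (RQ z)).ne', mul_add]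
    · simp [← h]
  simp only [e2, Finset.sum_add_distrib] at g
  have e3 : ∑ z : (Fin m → A) × (Fin n → A), R z * Real.log (P z.1) = - HH ν i m := by
    rw [Fintype.sum_prod_type]
    simp only [← Finset.sum_mul, m1, HH, Real.negMulLog, ← Finset.sum_neg_distrib]
    refine Finset.sum_congr rfl fun u _ => ?_
    simp [hP]
  have e4 : ∑ z : (Fin m → A) × (Fin n → A), R z * Real.log (Q z.2) = - HH ν (i + m) n := by
    rw [Fintype.sum_prod_type_right]
    simp only [← Finset.sum_mul, m2, HH, Real.negMulLog, ← Finset.sum_neg_distrib]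
    refine Finset.sum_congr rfl fun u _ => ?_
    simp [hQ]
  rw [e3, e4, Real.log_one] at g
  linarith

lemma HH_le_card (ν : Measure (Cfg1 A)) [IsProbabilityMeasure ν] (i k : ℕ)
    (L : Set (Fin k → A)) (hL : ∀ u, u ∉ L → ν.real (blk i k ⁻¹' {u}) = 0) :
    HH ν i k ≤ Real.log L.ncard := by
  have g := gibbs (fun u => ν.real (blk i k ⁻¹' {u})) (fun u => if u ∈ L then 1 else 0)
    (fun _ => measureReal_nonneg) (fun u => by split_ifs <;> norm_num)
    (fun u hu => hL u (by intro h; simp [h] at hu)) (part_sum_one ν i k) L.ncard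
    (by
      rw [Finset.sum_boole, Set.ncard_eq_toFinset_card']
      simp)
  have : ∀ u, ν.real (blk i k ⁻¹' {u}) * Real.log (if u ∈ L then 1 else 0) = 0 := by
    intro u; split_ifs <;> simp
  simp only [this, Finset.sum_const_zero, add_zero] at g
  exact g

lemma HH_le (ν : Measure (Cfg1 A)) [IsProbabilityMeasure ν] (i k : ℕ) :
    HH ν i k ≤ k * Real.log (Fintype.card A) := by
  have := HH_le_card ν i k Set.univ (fun u hu => absurd (Set.mem_univ u) hu)
  rw [Set.ncard_univ, Nat.card_eq_fintype_card, Fintype.card_fun, Fintype.card_fin] at this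
  simpa using this

lemma HH_mul (ν : Measure (Cfg1 A)) [IsProbabilityMeasure ν] (i q M : ℕ) :
    HH ν i (q * M) ≤ ∑ k ∈ Finset.range M, HH ν (q * k + i) q := by
  induction M with
  | zero =>
    have := HH_le ν i 0
    simpa using this
  | succ M ih =>
    rw [Finset.sum_range_succ, Nat.mul_succ]
    have := HH_sub ν i (q * M) q
    rw [add_comm i] at this
    linarith

lemma sum_range_mul' (f : ℕ → ℝ) (q M : ℕ) :
    ∑ i ∈ Finset.range (q * M), f i
      = ∑ r ∈ Finset.range q, ∑ k ∈ Finset.range M, f (q * k + r) := by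
  induction M with
  | zero => simp
  | succ M ih =>
    rw [Nat.mul_succ, Finset.sum_range_add, ih, ← Finset.sum_add_distrib]
    refine Finset.sum_congr rfl fun r _ => ?_
    rw [Finset.sum_range_succ]

lemma HH_misi (ν : Measure (Cfg1 A)) [IsProbabilityMeasure ν] (q N : ℕ) (hN : 1 ≤ N) :
    q * HH ν 0 (q * N) ≤ ∑ i ∈ Finset.range (q * N), HH ν i q
      + q * (q * Real.log (Fintype.card A)) := by
  obtain ⟨M, rfl⟩ : ∃ M, N = M + 1 := ⟨N - 1, by omega⟩
  have key : ∀ r ∈ Finset.range q, HH ν 0 (q * (M + 1)) ≤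
      ∑ k ∈ Finset.range (M + 1), HH ν (q * k + r) q + q * Real.log (Fintype.card A) := by
    intro r hr
    have hr := Finset.mem_range.1 hr
    have e : q * (M + 1) = r + (q * M + (q - r)) := by
      rw [Nat.mul_succ]; omega
    rw [e]
    have h1 := HH_sub ν 0 r (q * M + (q - r))
    have h2 := HH_sub ν (0 + r) (q * M) (q - r)
    have h3 := HH_le ν 0 r
    have h4 := HH_le ν (0 + r + q * M) (q - r)
    have h5 := HH_mul ν (0 + r) q M
    rw [Finset.sum_range_succ]
    have h6 := HH_nonneg ν (q * M + r) q
    rw [Nat.cast_sub hr.le] at h4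
    simp only [zero_add] at *
    linarith
  have := Finset.sum_le_sum key
  rw [Finset.sum_add_distrib, ← sum_range_mul' (fun i => HH ν i q)] at this
  simpa using this

end P1

section P2

variable {A : Type} [Fintype A] [TopologicalSpace A] [DiscreteTopology A]
  [MeasurableSpace A] [BorelSpace A]

lemma shift_iter (x : Cfg1 A) (i t : ℕ) : (shift1^[i] x) t = x (t + i) := by
  induction i generalizing x with
  | zero => rfl
  | succ i ih =>
    rw [Function.iterate_succ_apply, ih]
    simp [shift1, add_assoc]

lemma blk_shift (x : Cfg1 A) (s k i : ℕ) : blk s k (shift1^[i] x) = blk (s + i) k x := by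
  ext t
  simp only [blk, shift_iter]
  congr 1; omega

lemma continuous_shift : Continuous (shift1 : Cfg1 A → Cfg1 A) :=
  continuous_pi fun _ => continuous_apply _

lemma measurable_shift : Measurable (shift1 : Cfg1 A → Cfg1 A) :=
  measurable_pi_lambda _ fun _ => measurable_pi_apply _

lemma shift_mem {X₀ : Set (Cfg1 A)} (h : IsSubshift1 X₀) (x : Cfg1 A) (hx : x ∈ X₀) (i : ℕ) :
    shift1^[i] x ∈ X₀ := by
  induction i with
  | zero => exact hx
  | succ i ih => rw [Function.iterate_succ_apply']; exact h.2.2 _ ih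

lemma avg_exists (ν : Measure (Cfg1 A)) [IsProbabilityMeasure ν] (n : ℕ) (hn : 1 ≤ n) :
    ∃ μ : Measure (Cfg1 A), IsProbabilityMeasure μ ∧
      (∀ B, MeasurableSet B → μ.real B = (n : ℝ)⁻¹ * ∑ i ∈ Finset.range n,
        ν.real (shift1^[i] ⁻¹' B)) ∧
      (∀ f : Cfg1 A → ℝ, Continuous f → ∫ x, f x ∂μ = (n : ℝ)⁻¹ * ∑ i ∈ Finset.range n,
        ∫ x, f (shift1^[i] x) ∂ν) := by
  have hms : ∀ i, Measurable (shift1^[i] : Cfg1 A → Cfg1 A) := fun i => measurable_shift.iterate i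
  have hpr : ∀ i, IsProbabilityMeasure (ν.map (shift1^[i])) := fun i =>
    Measure.isProbabilityMeasure_map (hms i).aemeasurable
  have hn0 : (n : ℝ≥0∞) ≠ 0 := by exact_mod_cast (by omega : n ≠ 0)
  refine ⟨(n : ℝ≥0∞)⁻¹ • ∑ i ∈ Finset.range n, ν.map (shift1^[i]), ⟨?_⟩, ?_, ?_⟩
  · simp [ENNReal.inv_mul_cancel hn0 (ENNReal.natCast_ne_top n)]
  · intro B hB
    rw [measureReal_ennreal_smul_apply]
    simp only [ENNReal.toReal_inv, ENNReal.toReal_natCast]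
    congr 1
    rw [measureReal_def, Measure.finsetSum_apply, ENNReal.toReal_sum]
    · refine Finset.sum_congr rfl fun i _ => ?_
      rw [Measure.map_apply (hms i) hB]; rfl
    · intro i _; exact measure_ne_top _ _
  · intro f hf
    obtain ⟨C, hC⟩ := isCompact_univ.exists_bound_of_continuousOn hf.continuousOn
    have hint : ∀ i, Integrable f (ν.map (shift1^[i])) := fun i =>
      Integrable.of_bound hf.aestronglyMeasurable C (ae_of_all _ fun x => hC x (Set.mem_univ x))
    rw [integral_smul_measure, integral_finsetSum_measure (fun i _ => hint i)]
    simp only [ENNReal.toReal_inv, ENNReal.toReal_natCast, smul_eq_mul]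
    congr 1
    refine Finset.sum_congr rfl fun i _ => ?_
    rw [integral_map (hms i).aemeasurable hf.aestronglyMeasurable]

lemma lang_nonempty {X₀ : Set (Cfg1 A)} (h : IsSubshift1 X₀) (n : ℕ) : (lang1 X₀ n).Nonempty := by
  obtain ⟨x, hx⟩ := h.1
  exact ⟨fun i => x i, x, hx, fun _ => rfl⟩

lemma unif_exists {X₀ : Set (Cfg1 A)} (h : IsSubshift1 X₀) (n : ℕ) :
    ∃ ν : Measure (Cfg1 A), IsProbabilityMeasure ν ∧ ν X₀ = 1 ∧
      Real.log (lang1 X₀ n).ncard ≤ HH ν 0 n := by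
  have hy : ∀ w : Fin n → A, ∃ y, w ∈ lang1 X₀ n → y ∈ X₀ ∧ blk 0 n y = w := by
    intro w
    by_cases hw : w ∈ lang1 X₀ n
    · obtain ⟨y, hy, hyw⟩ := hw
      exact ⟨y, fun _ => ⟨hy, by ext t; simpa [blk] using hyw t⟩⟩
    · obtain ⟨x, hx⟩ := h.1
      exact ⟨x, fun h => absurd h hw⟩
  choose y hy using hy
  set L := (lang1 X₀ n).toFinset with hL
  have hcard : (lang1 X₀ n).ncard = L.card := Set.ncard_eq_toFinset_card' _
  have hLne : L.Nonempty := by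
    obtain ⟨w, hw⟩ := lang_nonempty h n
    exact ⟨w, by simpa [hL] using hw⟩
  have hc0 : (L.card : ℝ≥0∞) ≠ 0 := by exact_mod_cast hLne.card_pos.ne'
  have hX : MeasurableSet X₀ := h.2.1.measurableSet
  set ν : Measure (Cfg1 A) := (L.card : ℝ≥0∞)⁻¹ • ∑ w ∈ L, Measure.dirac (y w) with hν
  have hprob : IsProbabilityMeasure ν := ⟨by
    simp [hν, ENNReal.inv_mul_cancel hc0 (ENNReal.natCast_ne_top _)]⟩
  refine ⟨ν, hprob, ?_, ?_⟩
  · rw [hν, Measure.smul_apply, Measure.finsetSum_apply]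
    have : ∀ w ∈ L, Measure.dirac (y w) X₀ = 1 := by
      intro w hw
      exact Measure.dirac_apply_of_mem ((hy w (by simpa [hL] using hw)).1)
    rw [Finset.sum_congr rfl this]
    simp [ENNReal.inv_mul_cancel hc0 (ENNReal.natCast_ne_top _)]
  · have hval : ∀ u ∈ L, ν.real (blk 0 n ⁻¹' {u}) = (L.card : ℝ)⁻¹ := by
      intro u hu
      rw [measureReal_def, hν, Measure.smul_apply, Measure.finsetSum_apply,
        Finset.sum_eq_single_of_mem u hu]
      · rw [Measure.dirac_apply_of_mem]
        · simp
        · exact (hy u (by simpa [hL] using hu)).2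
      · intro w hw hwu
        rw [Measure.dirac_apply' _ (meas_blk 0 n u)]
        simp [(hy w (by simpa [hL] using hw)).2, hwu]
    have h1 : ∑ u ∈ L, Real.negMulLog (ν.real (blk 0 n ⁻¹' {u})) ≤ HH ν 0 n :=
      Finset.sum_le_sum_of_subset_of_nonneg (Finset.subset_univ _) fun _ _ _ =>
        Real.negMulLog_nonneg measureReal_nonneg measureReal_le_one
    refine le_trans (le_of_eq ?_) h1
    rw [Finset.sum_congr rfl (fun u hu => by rw [hval u hu])]
    have : (L.card : ℝ) ≠ 0 := by exact_mod_cast hLne.card_pos.ne'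
    simp only [Real.negMulLog, Finset.sum_const, nsmul_eq_mul, Real.log_inv, hcard]
    field_simp

lemma topEnt_le (X₀ : Set (Cfg1 A)) (n : ℕ) (hn : 1 ≤ n) :
    n * topEnt1 X₀ ≤ Real.log (lang1 X₀ n).ncard := by
  have h : topEnt1 X₀ ≤ (n : ℝ)⁻¹ * Real.log ((lang1 X₀ n).ncard) :=
    ciInf_le (f := fun n : {n : ℕ // 1 ≤ n} =>
      (n.1 : ℝ)⁻¹ * Real.log ((lang1 X₀ n.1).ncard)) ⟨0, by
        rintro _ ⟨m, rfl⟩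
        exact mul_nonneg (by positivity) (Real.log_natCast_nonneg _)⟩ ⟨n, hn⟩
  have hn' : (0 : ℝ) < n := by exact_mod_cast hn
  calc n * topEnt1 X₀ ≤ n * ((n : ℝ)⁻¹ * Real.log ((lang1 X₀ n).ncard)) := by gcongr
    _ = _ := by field_simp

lemma topEnt_nonneg (X₀ : Set (Cfg1 A)) : 0 ≤ topEnt1 X₀ := by
  have : Nonempty {n : ℕ // 1 ≤ n} := ⟨⟨1, le_rfl⟩⟩
  exact le_ciInf fun n => mul_nonneg (by positivity) (Real.log_natCast_nonneg _)

lemma entropy_le (μ : Measure (Cfg1 A)) [IsProbabilityMeasure μ] (n : ℕ) (hn : 1 ≤ n) :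
    entropy1 μ ≤ (n : ℝ)⁻¹ * HH μ 0 n := by
  rw [entropy_eq]
  exact ciInf_le (f := fun n : {n : ℕ // 1 ≤ n} => (n.1 : ℝ)⁻¹ * HH μ 0 n.1) ⟨0, by
        rintro _ ⟨m, rfl⟩
        exact mul_nonneg (by positivity) (HH_nonneg _ _ _)⟩ ⟨n, hn⟩

lemma le_entropy (μ : Measure (Cfg1 A)) (c : ℝ) (h : ∀ n : ℕ, 1 ≤ n → n * c ≤ HH μ 0 n) :
    c ≤ entropy1 μ := by
  have : Nonempty {n : ℕ // 1 ≤ n} := ⟨⟨1, le_rfl⟩⟩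
  rw [entropy_eq]
  refine le_ciInf fun n => ?_
  have hn' : (0 : ℝ) < n.1 := by exact_mod_cast n.2
  rw [inv_mul_eq_div, le_div_iff₀ hn', mul_comm]
  exact h n.1 n.2

lemma entropy_le_top {X₀ : Set (Cfg1 A)} (hX : IsClosed X₀) (μ : Measure (Cfg1 A))
    [IsProbabilityMeasure μ] (hμ : μ X₀ = 1) : entropy1 μ ≤ topEnt1 X₀ := by
  have : Nonempty {n : ℕ // 1 ≤ n} := ⟨⟨1, le_rfl⟩⟩
  refine le_ciInf fun n => (entropy_le μ n.1 n.2).trans ?_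
  gcongr
  refine HH_le_card μ 0 n.1 _ fun u hu => ?_
  have h0 : μ X₀ᶜ = 0 := (prob_compl_eq_zero_iff hX.measurableSet).2 hμ
  rw [measureReal_def, measure_mono_null _ h0, ENNReal.toReal_zero]
  intro x hx hx0
  refine hu ⟨x, hx0, fun i => ?_⟩
  have : blk 0 n.1 x = u := hx
  rw [← this]; simp [blk]

lemma isClopen_blk (i k : ℕ) (u : Fin k → A) : IsClopen (blk (A := A) i k ⁻¹' {u}) :=
  (isClopen_discrete {u}).preimage (continuous_blk i k)

lemma tendsto_HH {ι : Type*} {F : Filter ι} {μs : ι → Measure (Cfg1 A)} {μ : Measure (Cfg1 A)}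
    (h : ∀ k (u : Fin k → A), Tendsto (fun n => (μs n).real (blk 0 k ⁻¹' {u})) F
      (𝓝 (μ.real (blk 0 k ⁻¹' {u})))) (q : ℕ) :
    Tendsto (fun n => HH (μs n) 0 q) F (𝓝 (HH μ 0 q)) :=
  tendsto_finsetSum _ fun u _ => (Real.continuous_negMulLog.tendsto _).comp (h q u)

lemma invariant_of_integral (μ : Measure (Cfg1 A)) [IsProbabilityMeasure μ]
    (h : ∀ f : Cfg1 A → ℝ, Continuous f → ∫ x, f (shift1 x) ∂μ = ∫ x, f x ∂μ) :
    Invariant1 μ := by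
  have : IsProbabilityMeasure (μ.map shift1) :=
    Measure.isProbabilityMeasure_map measurable_shift.aemeasurable
  refine ext_of_forall_integral_eq_of_IsFiniteMeasure fun f => ?_
  rw [integral_map measurable_shift.aemeasurable f.continuous.aestronglyMeasurable]
  exact h f f.continuous

lemma mme_exists {X₀ : Set (Cfg1 A)} (h : IsSubshift1 X₀) : ∃ μ, IsMME1 X₀ μ := by
  choose ν hνp hν0 hνH using fun N : ℕ => unif_exists h (N.factorial)
  choose μs hμp hμB hμf using fun N : ℕ => avg_exists (ν N) N.factorial (Nat.factorial_pos N)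
  let F : Filter ℕ := (hyperfilter ℕ : Filter ℕ)
  have hF : F ≤ atTop := by
    rw [← Nat.cofinite_eq_atTop]; exact hyperfilter_le_cofinite
  let P : ℕ → ProbabilityMeasure (Cfg1 A) := fun N => ⟨μs N, hμp N⟩
  have hfac : Tendsto (fun N : ℕ => ((N.factorial : ℝ))⁻¹) F (𝓝 0) :=
    (tendsto_inv_atTop_zero.comp (tendsto_natCast_atTop_atTop.comp
      (tendsto_atTop_mono Nat.self_le_factorial tendsto_id))).mono_left hF
  obtain ⟨μ, hμ⟩ : ∃ μ : ProbabilityMeasure (Cfg1 A), Tendsto P F (𝓝 μ) := by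
    obtain ⟨μ, -, hμ⟩ := isCompact_univ.ultrafilter_le_nhds ((hyperfilter ℕ).map P) (by simp)
    exact ⟨μ, hμ⟩
  have hint := (ProbabilityMeasure.tendsto_iff_forall_integral_tendsto.1 hμ)
  have hcyl : ∀ k (u : Fin k → A), Tendsto (fun n => (μs n).real (blk 0 k ⁻¹' {u})) F
      (𝓝 ((μ : Measure (Cfg1 A)).real (blk 0 k ⁻¹' {u}))) := by
    intro k u
    have := ProbabilityMeasure.tendsto_measure_of_null_frontier_of_tendsto' hμ
      (E := blk 0 k ⁻¹' {u}) (by rw [(isClopen_blk 0 k u).frontier_eq]; simp)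
    exact (ENNReal.tendsto_toReal (measure_ne_top _ _)).comp this
  have hX1 : (μ : Measure (Cfg1 A)) X₀ = 1 := by
    refine le_antisymm prob_le_one ?_
    have := ProbabilityMeasure.limsup_measure_closed_le_of_tendsto hμ h.2.1
    refine le_trans ?_ this
    have e : ∀ N, (P N : Measure (Cfg1 A)) X₀ = 1 := by
      intro N
      have := hμB N X₀ h.2.1.measurableSet
      have e2 : ∀ i ∈ Finset.range N.factorial, (ν N).real (shift1^[i] ⁻¹' X₀) = 1 := by
        intro i _
        have : (ν N) (shift1^[i] ⁻¹' X₀) = 1 :=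
          le_antisymm prob_le_one ((hν0 N).symm.le.trans
            (measure_mono fun x hx => shift_mem h x hx i))
        rw [measureReal_def, this]; rfl
      rw [Finset.sum_congr rfl e2] at this
      have hz : (N.factorial : ℝ) ≠ 0 := by exact_mod_cast Nat.factorial_ne_zero N
      simp [hz] at this
      have h2 := congrArg ENNReal.ofReal this
      rw [ofReal_measureReal, ENNReal.ofReal_one] at h2
      exact h2
    simp only [e]
    simp
  have hinv : Invariant1 (μ : Measure (Cfg1 A)) := by
    refine invariant_of_integral _ fun f hf => ?_
    have t1 : Tendsto (fun N => ∫ x, f x ∂(μs N)) F (𝓝 (∫ x, f x ∂(μ : Measure (Cfg1 A)))) :=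
      hint (BoundedContinuousFunction.mkOfCompact ⟨f, hf⟩)
    have t2 : Tendsto (fun N => ∫ x, f (shift1 x) ∂(μs N)) F
        (𝓝 (∫ x, f (shift1 x) ∂(μ : Measure (Cfg1 A)))) :=
      hint (BoundedContinuousFunction.mkOfCompact ⟨_, hf.comp continuous_shift⟩)
    obtain ⟨C, hC⟩ := isCompact_univ.exists_bound_of_continuousOn hf.continuousOn
    have t3 : Tendsto (fun N => ∫ x, f (shift1 x) ∂(μs N) - ∫ x, f x ∂(μs N)) F (𝓝 0) := by
      refine squeeze_zero_norm (a := fun N => ((N.factorial : ℝ))⁻¹ * (C + C)) (fun N => ?_) ?_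
      · rw [hμf N (fun x => f (shift1 x)) (hf.comp continuous_shift), hμf N _ hf, ← mul_sub,
          ← Finset.sum_sub_distrib]
        simp only [← Function.iterate_succ_apply' shift1]
        rw [Finset.sum_range_sub (fun i => ∫ x, f (shift1^[i] x) ∂(ν N)), norm_mul]
        have b : ∀ i, ‖∫ x, f (shift1^[i] x) ∂(ν N)‖ ≤ C := by
          intro i
          have := norm_integral_le_of_norm_le_const (μ := ν N) (C := C)
            (f := fun x => f (shift1^[i] x)) (ae_of_all _ fun x => hC _ (Set.mem_univ _))
          simpa using this
        rw [norm_inv, RCLike.norm_natCast]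
        gcongr
        exact (norm_sub_le _ _).trans (add_le_add (b _) (b _))
      · simpa using hfac.mul_const (C + C)
    have t4 := tendsto_nhds_unique (t2.sub t1) t3
    linarith
  have hent : ∀ q : ℕ, 1 ≤ q → q * topEnt1 X₀ ≤ HH (μ : Measure (Cfg1 A)) 0 q := by
    intro q hq
    have t1 := tendsto_HH hcyl q
    have t2 : Tendsto (fun N : ℕ => q * topEnt1 X₀ -
        ((N.factorial : ℝ))⁻¹ * (q * (q * Real.log (Fintype.card A)))) F
        (𝓝 (q * topEnt1 X₀)) := by
      simpa using (hfac.mul_const (q * (q * Real.log (Fintype.card A)))).const_sub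
        (q * topEnt1 X₀)
    refine le_of_tendsto_of_tendsto t2 t1 (hF ?_)
    filter_upwards [eventually_ge_atTop q] with N hN
    obtain ⟨M, hM⟩ : q ∣ N.factorial := Nat.dvd_factorial hq hN
    have hMpos : 1 ≤ M := by
      rcases Nat.eq_zero_or_pos M with h0 | h0
      · rw [h0] at hM; exact absurd hM (by simpa using Nat.factorial_ne_zero N)
      · exact h0
    have m1 := HH_misi (ν N) q M hMpos
    rw [← hM] at m1
    have hz : (0 : ℝ) < (N.factorial : ℝ) := by exact_mod_cast Nat.factorial_pos N
    have m2 : (N.factorial : ℝ)⁻¹ * ∑ i ∈ Finset.range N.factorial, HH (ν N) i q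
        ≤ HH (μs N) 0 q := by
      simp only [HH]
      rw [Finset.sum_comm, Finset.mul_sum]
      refine Finset.sum_le_sum fun u _ => ?_
      rw [hμB N _ (meas_blk 0 q u)]
      have := Real.concaveOn_negMulLog.le_map_sum (t := Finset.range N.factorial)
        (w := fun _ => (N.factorial : ℝ)⁻¹)
        (p := fun i => (ν N).real (blk i q ⁻¹' {u})) (fun _ _ => by positivity)
        (by simp [hz.ne']) (fun _ _ => measureReal_nonneg)
      simp only [smul_eq_mul, ← Finset.mul_sum] at this
      convert this using 6
      ext x; simp [blk_shift]
    have m3 := topEnt_le X₀ N.factorial (Nat.factorial_pos N)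
    have m4 := m3.trans (hνH N)
    have m5 : (q : ℝ) * ((N.factorial : ℝ) * topEnt1 X₀) ≤ q * HH (ν N) 0 N.factorial := by
      gcongr
    have m6 : (N.factorial : ℝ)⁻¹ * (q * ((N.factorial : ℝ) * topEnt1 X₀)) ≤
       (N.factorial : ℝ)⁻¹ * (∑ i ∈ Finset.range N.factorial, HH (ν N) i q
      + q * (q * Real.log (Fintype.card A))) := by
      gcongr; linarith
    have m7 : (N.factorial : ℝ)⁻¹ * (q * ((N.factorial : ℝ) * topEnt1 X₀)) = q * topEnt1 X₀ := by
      field_simp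
    rw [m7, mul_add] at m6
    linarith
  exact ⟨μ, inferInstance, hinv, hX1, le_antisymm (entropy_le_top h.2.1 _ hX1)
    (le_entropy _ _ hent)⟩

end P2

section P3

variable {A : Type} [Fintype A] [TopologicalSpace A] [DiscreteTopology A]
  [MeasurableSpace A] [BorelSpace A]

def Leg (X₀ : Set (Cfg1 A)) (x : Cfg1 A) (i k : ℕ) : Prop := blk i k x ∈ lang1 X₀ k

lemma leg_iff {X₀ : Set (Cfg1 A)} {x : Cfg1 A} {i k : ℕ} :
    Leg X₀ x i k ↔ ∃ y ∈ X₀, ∀ t < k, y t = x (i + t) := by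
  simp only [Leg, lang1, blk, Set.mem_ofPred_eq]
  exact ⟨fun ⟨y, hy, h⟩ => ⟨y, hy, fun t ht => h ⟨t, ht⟩⟩,
    fun ⟨y, hy, h⟩ => ⟨y, hy, fun t => h t t.2⟩⟩

lemma leg_sub {X₀ : Set (Cfg1 A)} (hX : IsSubshift1 X₀) {x : Cfg1 A} {i k i' k' : ℕ}
    (h : Leg X₀ x i k) (h1 : i ≤ i') (h2 : i' + k' ≤ i + k) : Leg X₀ x i' k' := by
  rw [leg_iff] at *
  obtain ⟨y, hy, h⟩ := h
  refine ⟨shift1^[i' - i] y, shift_mem hX y hy _, fun t ht => ?_⟩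
  rw [shift_iter, h _ (by omega)]
  congr 1; omega

lemma leg_zero {X₀ : Set (Cfg1 A)} (hX : IsSubshift1 X₀) (x : Cfg1 A) (i : ℕ) :
    Leg X₀ x i 0 := by
  obtain ⟨y, hy⟩ := hX.1
  exact leg_iff.2 ⟨y, hy, fun t ht => absurd ht (by omega)⟩

lemma leg_shift {X₀ : Set (Cfg1 A)} {x : Cfg1 A} {i j k : ℕ} :
    Leg X₀ (shift1^[j] x) i k ↔ Leg X₀ x (i + j) k := by
  rw [Leg, blk_shift, Leg]

lemma leg_congr {X₀ : Set (Cfg1 A)} {x y : Cfg1 A} {n i k : ℕ} (h : blk 0 n x = blk 0 n y)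
    (hk : k = 0 ∨ i + k ≤ n) : Leg X₀ x i k ↔ Leg X₀ y i k := by
  have : blk i k x = blk i k y := by
    ext t
    have ht := t.2
    have := congrFun h ⟨i + t, by omega⟩
    simpa [blk] using this
  rw [Leg, this, Leg]

lemma exists_not_leg {X₀ : Set (Cfg1 A)} (hX : IsSubshift1 X₀) {x : Cfg1 A} (hx : x ∉ X₀) :
    ∃ k, ¬ Leg X₀ x 0 k := by
  by_contra! hcon
  choose y hy hyx using fun k => leg_iff.1 (hcon k)
  refine hx (hX.2.1.mem_of_tendsto (f := y) (b := atTop) ?_ (Eventually.of_forall hy))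
  rw [tendsto_pi_nhds]
  intro t
  refine tendsto_const_nhds.congr' ?_
  filter_upwards [eventually_gt_atTop t] with k hk
  rw [hyx k t hk, zero_add]

lemma mem_leg {X₀ : Set (Cfg1 A)} {x : Cfg1 A} (hx : x ∈ X₀) (k : ℕ) : Leg X₀ x 0 k :=
  leg_iff.2 ⟨x, hx, fun t _ => by rw [zero_add]⟩

structure Pot (X₀ : Set (Cfg1 A)) (a : ℕ → ℝ) (φ : Cfg1 A → ℝ) : Prop where
  sub : IsSubshift1 X₀
  pos : ∀ j, 0 < a j
  dec : Antitone a
  lim : Tendsto a atTop (𝓝 0)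
  h0 : ∀ x ∈ X₀, φ x = 0
  h1 : ∀ x ∉ X₀, ∀ j : ℕ, distToSub1 X₀ x = (2 : ℝ) ^ (-(j : ℤ)) → φ x = -(a j)

variable {X₀ : Set (Cfg1 A)} {a : ℕ → ℝ} {φ : Cfg1 A → ℝ}

lemma Pot.eq (P : Pot X₀ a φ) {x : Cfg1 A} {k : ℕ} (hk : Leg X₀ x 0 k)
    (hk1 : ¬ Leg X₀ x 0 (k + 1)) : φ x = - a k := by
  have hx : x ∉ X₀ := fun h => hk1 (mem_leg h _)
  refine P.h1 x hx k ?_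
  have hne : ∀ y ∈ X₀, x ≠ y := fun y hy h => hx (h ▸ hy)
  have hd : ∀ y ∈ X₀, dist1 x y = (2 : ℝ) ^ (-((sInf { i : ℕ | x i ≠ y i } : ℕ) : ℤ)) := by
    intro y hy; rw [dist1, if_neg (hne y hy)]
  have hle : ∀ y ∈ X₀, sInf { i : ℕ | x i ≠ y i } ≤ k := by
    intro y hy
    by_contra! hlt
    refine hk1 (leg_iff.2 ⟨y, hy, fun t ht => ?_⟩)
    have := Nat.notMem_of_lt_sInf (lt_of_lt_of_le ht hlt)
    simp at this
    rw [zero_add, this]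
  have hall : ∀ y ∈ X₀, (2 : ℝ) ^ (-(k : ℤ)) ≤ dist1 x y := by
    intro y hy
    rw [hd y hy]
    apply zpow_le_zpow_right₀ (by norm_num)
    have := hle y hy
    omega
  obtain ⟨y, hy, hyx⟩ := leg_iff.1 hk
  have hyk : dist1 x y = (2 : ℝ) ^ (-(k : ℤ)) := by
    rw [hd y hy]
    have : sInf { i : ℕ | x i ≠ y i } = k := by
      refine le_antisymm (hle y hy) ?_
      by_contra! hlt
      have hmem := Nat.sInf_mem (s := { i : ℕ | x i ≠ y i }) (by
        by_contra! hemp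
        refine hne y hy (funext fun i => ?_)
        by_contra hi
        exact absurd (show i ∈ { i : ℕ | x i ≠ y i } from hi) (by simp [hemp]))
      exact hmem (by rw [hyx _ hlt, zero_add])
    rw [this]
  rw [distToSub1]
  apply le_antisymm
  · exact csInf_le ⟨0, by
      rintro _ ⟨z, hz, rfl⟩
      rw [hd z hz]; positivity⟩ ⟨y, hy, hyk.symm⟩
  · exact le_csInf ⟨_, y, hy, rfl⟩ (by rintro _ ⟨z, hz, rfl⟩; exact hall z hz)

lemma Pot.cases (P : Pot X₀ a φ) (x : Cfg1 A) : (x ∈ X₀ ∧ φ x = 0) ∨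
    ∃ k, Leg X₀ x 0 k ∧ ¬ Leg X₀ x 0 (k + 1) ∧ φ x = - a k := by
  by_cases hx : x ∈ X₀
  · exact Or.inl ⟨hx, P.h0 x hx⟩
  · right
    have hex := exists_not_leg P.sub hx
    obtain ⟨k, hk⟩ : ∃ k, Nat.find hex = k + 1 := by
      refine ⟨Nat.find hex - 1, ?_⟩
      have : Nat.find hex ≠ 0 := fun h => by
        have := Nat.find_spec hex
        rw [h] at this
        exact this (leg_zero P.sub x 0)
      omega
    have h1 : Leg X₀ x 0 k := by
      by_contra h
      have := Nat.find_min' hex h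
      omega
    have h2 : ¬ Leg X₀ x 0 (k + 1) := by rw [← hk]; exact Nat.find_spec hex
    exact ⟨k, h1, h2, P.eq h1 h2⟩

lemma Pot.nonpos (P : Pot X₀ a φ) (x : Cfg1 A) : φ x ≤ 0 := by
  rcases P.cases x with ⟨_, h⟩ | ⟨k, _, _, h⟩
  · exact h.le
  · rw [h]; linarith [P.pos k]

lemma Pot.le (P : Pot X₀ a φ) {x : Cfg1 A} {k : ℕ} (hk : ¬ Leg X₀ x 0 (k + 1)) :
    φ x ≤ - a k := by
  rcases P.cases x with ⟨h, _⟩ | ⟨l, hl, _, h⟩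
  · exact absurd (mem_leg h _) hk
  · rw [h, neg_le_neg_iff]
    apply P.dec
    by_contra! hlt
    exact hk (leg_sub P.sub hl le_rfl (by omega))

lemma Pot.ge (P : Pot X₀ a φ) {x : Cfg1 A} {k : ℕ} (hk : Leg X₀ x 0 k) : - a k ≤ φ x := by
  rcases P.cases x with ⟨_, h⟩ | ⟨l, _, hl, h⟩
  · rw [h]; linarith [P.pos k]
  · rw [h, neg_le_neg_iff]
    apply P.dec
    by_contra! hlt
    exact hl (leg_sub P.sub hk le_rfl (by omega))

lemma Pot.bound (P : Pot X₀ a φ) (x : Cfg1 A) : ‖φ x‖ ≤ a 0 := by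
  rw [Real.norm_eq_abs, abs_le]
  exact ⟨P.ge (leg_zero P.sub x 0), (P.nonpos x).trans (P.pos 0).le⟩

lemma Pot.mem_of_zero (P : Pot X₀ a φ) {x : Cfg1 A} (h : φ x = 0) : x ∈ X₀ := by
  rcases P.cases x with ⟨h, _⟩ | ⟨l, _, _, h'⟩
  · exact h
  · linarith [P.pos l]

lemma Pot.cont (P : Pot X₀ a φ) : Continuous φ := by
  have nb : ∀ (x : Cfg1 A) (n : ℕ), ∀ᶠ y in 𝓝 x, blk 0 n x = blk 0 n y := by
    intro x n
    have := (isClopen_blk 0 n (blk 0 n x)).isOpen.mem_nhds (x := x) rfl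
    filter_upwards [this] with y hy
    exact hy.symm
  rw [continuous_iff_continuousAt]
  intro x
  rcases P.cases x with ⟨hx, h⟩ | ⟨k, hk, hk1, h⟩
  · rw [ContinuousAt, h, Metric.tendsto_nhds]
    intro ε hε
    obtain ⟨k, hk⟩ := (P.lim.eventually (gt_mem_nhds hε)).exists
    filter_upwards [nb x k] with y hy
    have hl : Leg X₀ y 0 k := (leg_congr hy (Or.inr (by omega))).1 (mem_leg hx k)
    have h1 := P.ge hl
    have h2 := P.nonpos y
    rw [Real.dist_eq, sub_zero, abs_lt]
    constructor <;> linarith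
  · refine ContinuousAt.congr (f := fun _ => φ x) continuousAt_const ?_
    filter_upwards [nb x (k + 1)] with y hy
    rw [h, P.eq ((leg_congr hy (Or.inr (by omega))).1 hk)
      (fun hh => hk1 ((leg_congr hy (Or.inr (by omega))).2 hh))]

end P3

section P4

variable {A : Type} [Fintype A] [TopologicalSpace A] [DiscreteTopology A]
  [MeasurableSpace A] [BorelSpace A]
variable {X₀ : Set (Cfg1 A)} {a : ℕ → ℝ} {φ : Cfg1 A → ℝ}

noncomputable def SS (φ : Cfg1 A → ℝ) (n : ℕ) (x : Cfg1 A) : ℝ :=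
  ∑ i ∈ Finset.range n, - φ (shift1^[i] x)

noncomputable def psi (φ : Cfg1 A → ℝ) (n : ℕ) (w : Fin n → A) : ℝ :=
  ⨅ x : {x : Cfg1 A // blk 0 n x = w}, SS φ n x.1

noncomputable def ZZ (φ : Cfg1 A → ℝ) (β : ℝ) (n : ℕ) : ℝ :=
  ∑ w : Fin n → A, Real.exp (- β * psi φ n w)

lemma SS_nonneg (P : Pot X₀ a φ) (n : ℕ) (x : Cfg1 A) : 0 ≤ SS φ n x :=
  Finset.sum_nonneg fun i _ => by linarith [P.nonpos (shift1^[i] x)]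

lemma SS_add (n m : ℕ) (x : Cfg1 A) : SS φ (n + m) x = SS φ n x + SS φ m (shift1^[n] x) := by
  simp only [SS, Finset.sum_range_add]
  congr 1
  refine Finset.sum_congr rfl fun i _ => ?_
  rw [← Function.iterate_add_apply, add_comm i n]

lemma psi_le (P : Pot X₀ a φ) (n : ℕ) (x : Cfg1 A) : psi φ n (blk 0 n x) ≤ SS φ n x :=
  ciInf_le (f := fun y : {y : Cfg1 A // blk 0 n y = blk 0 n x} => SS φ n y.1)
    ⟨0, by rintro _ ⟨y, rfl⟩; exact SS_nonneg P n y.1⟩ ⟨x, rfl⟩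

lemma blk_surj [Nonempty A] (n : ℕ) (w : Fin n → A) : ∃ x : Cfg1 A, blk 0 n x = w := by
  refine ⟨fun i => if h : i < n then w ⟨i, h⟩ else Classical.arbitrary A, ?_⟩
  ext t; simp [blk]

lemma le_psi [Nonempty A] (n : ℕ) (w : Fin n → A) (c : ℝ)
    (h : ∀ x, blk 0 n x = w → c ≤ SS φ n x) : c ≤ psi φ n w := by
  obtain ⟨x, hx⟩ := blk_surj n w
  have : Nonempty {x : Cfg1 A // blk 0 n x = w} := ⟨⟨x, hx⟩⟩
  exact le_ciInf fun y => h y.1 y.2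

lemma ZZ_pos [Nonempty A] (β : ℝ) (n : ℕ) : 0 < ZZ φ β n :=
  Finset.sum_pos (fun _ _ => Real.exp_pos _) Finset.univ_nonempty

lemma blk_append_iff (j k : ℕ) (u : Fin j → A) (v : Fin k → A) (x : Cfg1 A) :
    blk 0 (j + k) x = Fin.append u v ↔ blk 0 j x = u ∧ blk j k x = v := by
  have := Set.ext_iff.1 (blk_append 0 j k u v) x
  simpa using this

lemma run_bound [Nonempty A] (P : Pot X₀ a φ) (β : ℝ) (hβ : 0 ≤ β) (j k : ℕ)
    (B : Set (Fin (j + k) → A)) (U : Set (Fin j → A)) (c : ℝ)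
    (h : ∀ x, blk 0 (j + k) x ∈ B → blk 0 j x ∈ U ∧ c ≤ SS φ j x) :
    (∑ w : Fin (j + k) → A, if w ∈ B then Real.exp (- β * psi φ (j + k) w) else 0)
      ≤ U.ncard * Real.exp (- β * c) * ZZ φ β k := by
  rw [← (Fin.appendEquiv j k).sum_comp, Fintype.sum_prod_type]
  have e : (U.ncard : ℝ) * Real.exp (- β * c) * ZZ φ β k =
      ∑ u : Fin j → A, ∑ v : Fin k → A,
        (if u ∈ U then 1 else 0) * Real.exp (- β * c) * Real.exp (- β * psi φ k v) := by
    simp only [← Finset.mul_sum, ← Finset.sum_mul, ZZ]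
    congr 2
    rw [Finset.sum_boole, Set.ncard_eq_toFinset_card']
    simp
  rw [e]
  refine Finset.sum_le_sum fun u _ => Finset.sum_le_sum fun v _ => ?_
  show (if Fin.append u v ∈ B then Real.exp (- β * psi φ (j + k) (Fin.append u v)) else 0) ≤ _
  split_ifs with hB hU hU
  · rw [one_mul, ← Real.exp_add]
    apply Real.exp_le_exp.2
    have : c + psi φ k v ≤ psi φ (j + k) (Fin.append u v) := by
      refine le_psi _ _ _ fun x hx => ?_
      rw [SS_add]
      have h1 := (h x (hx ▸ hB)).2
      have h2 := psi_le P k (shift1^[j] x)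
      rw [blk_shift, zero_add, ((blk_append_iff j k u v x).1 hx).2] at h2
      linarith
    nlinarith
  · exfalso
    obtain ⟨x, hx⟩ := blk_surj (j + k) (Fin.append u v)
    have := (h x (hx ▸ hB)).1
    rw [((blk_append_iff j k u v x).1 hx).1] at this
    exact hU this
  · positivity
  · simp

def TLeg (X₀ : Set (Cfg1 A)) (n : ℕ) (x : Cfg1 A) (i : ℕ) : Prop :=
  Leg X₀ x (2 ^ i - 1) (min (2 ^ i) (n - (2 ^ i - 1)))

lemma tleg_congr {n : ℕ} {x y : Cfg1 A} (h : blk 0 n x = blk 0 n y) (i : ℕ) :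
    TLeg X₀ n x i ↔ TLeg X₀ n y i :=
  leg_congr h (by omega)

def GG (X₀ : Set (Cfg1 A)) (n : ℕ) : Set (Fin n → A) :=
  {w | ∃ x, blk 0 n x = w ∧ ∀ i, TLeg X₀ n x i}

def Bad (X₀ : Set (Cfg1 A)) (n m : ℕ) : Set (Fin n → A) :=
  {w | ∃ x, blk 0 n x = w ∧ (∀ i < m, TLeg X₀ n x i) ∧ ¬ TLeg X₀ n x m}

lemma GG_card (hX : IsSubshift1 X₀) (m r : ℕ) (hr : r ≤ 2 ^ m) :
    (GG X₀ (2 ^ m - 1 + r)).ncard ≤ (GG X₀ (2 ^ m - 1)).ncard * (lang1 X₀ r).ncard := by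
  rw [← Set.ncard_prod]
  refine Set.ncard_le_ncard_of_injOn (Fin.appendEquiv (2 ^ m - 1) r).symm ?_
    (Equiv.injective _).injOn (Set.toFinite _)
  rintro w ⟨x, rfl, hx⟩
  obtain ⟨⟨u, v⟩, huv⟩ := (Fin.appendEquiv (2 ^ m - 1) r).surjective
    (blk 0 (2 ^ m - 1 + r) x)
  rw [← huv, Equiv.symm_apply_apply]
  obtain ⟨h1, h2⟩ := (blk_append_iff _ _ u v x).1 huv.symm
  refine ⟨⟨x, h1, fun i => ?_⟩, ?_⟩
  · exact leg_sub hX (hx i) le_rfl (by omega)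
  · show v ∈ lang1 X₀ r
    rw [← h2]
    have := hx m
    rw [TLeg] at this
    have e : min (2 ^ m) (2 ^ m - 1 + r - (2 ^ m - 1)) = r := by omega
    rw [e] at this
    exact this

lemma GG_card_pow (hX : IsSubshift1 X₀) (m : ℕ) :
    ((GG X₀ (2 ^ m - 1)).ncard : ℝ) ≤
      Real.exp (∑ i ∈ Finset.range m, Real.log (lang1 X₀ (2 ^ i)).ncard) := by
  induction m with
  | zero =>
    have : (GG X₀ (2 ^ 0 - 1)).ncard ≤ 1 := by
      refine (Set.ncard_le_card _).trans ?_
      simp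
    simpa using this
  | succ m ih =>
    have h := GG_card hX m (2 ^ m) le_rfl
    have e : 2 ^ m - 1 + 2 ^ m = 2 ^ (m + 1) - 1 := by
      have := Nat.one_le_two_pow (n := m)
      rw [pow_succ]; omega
    rw [e] at h
    have hpos : 0 < (lang1 X₀ (2 ^ m)).ncard :=
      (Set.ncard_pos (Set.toFinite _)).2 (lang_nonempty hX _)
    rw [Finset.sum_range_succ, Real.exp_add, Real.exp_log (by exact_mod_cast hpos)]
    calc ((GG X₀ (2 ^ (m + 1) - 1)).ncard : ℝ)
        ≤ (GG X₀ (2 ^ m - 1)).ncard * (lang1 X₀ (2 ^ m)).ncard := by exact_mod_cast h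
      _ ≤ _ := by gcongr

lemma two_pow_sub (m : ℕ) : m ≤ 2 ^ m - 1 := by
  have := Nat.lt_two_pow_self (n := m); omega

lemma ZZ_split [Nonempty A] (hX : IsSubshift1 X₀) (P : Pot X₀ a φ) (β : ℝ) (hβ : 0 ≤ β) (n : ℕ) :
    ZZ φ β n ≤ (GG X₀ n).ncard + ∑ m ∈ Finset.range n,
      ∑ w : Fin n → A, if w ∈ Bad X₀ n m then Real.exp (- β * psi φ n w) else 0 := by
  rw [Finset.sum_comm]
  have e : ((GG X₀ n).ncard : ℝ) = ∑ w : Fin n → A, if w ∈ GG X₀ n then 1 else 0 := by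
    rw [Finset.sum_boole, Set.ncard_eq_toFinset_card']
    simp
  rw [e, ← Finset.sum_add_distrib]
  refine Finset.sum_le_sum fun w _ => ?_
  have hnn : ∀ m ∈ Finset.range n,
      0 ≤ if w ∈ Bad X₀ n m then Real.exp (- β * psi φ n w) else 0 := by
    intro m _; split_ifs <;> positivity
  by_cases hw : w ∈ GG X₀ n
  · rw [if_pos hw]
    have h1 : Real.exp (- β * psi φ n w) ≤ 1 := by
      rw [Real.exp_le_one_iff]
      have : 0 ≤ psi φ n w := le_psi _ _ _ fun x _ => SS_nonneg P n x
      nlinarith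
    linarith [Finset.sum_nonneg hnn]
  · rw [if_neg hw, zero_add]
    obtain ⟨x, hx⟩ := blk_surj n w
    have hex : ∃ m, ¬ TLeg X₀ n x m := by
      by_contra! h
      exact hw ⟨x, hx, h⟩
    have hb : w ∈ Bad X₀ n (Nat.find hex) :=
      ⟨x, hx, fun i hi => by simpa using Nat.find_min hex hi, Nat.find_spec hex⟩
    have hlt : Nat.find hex < n := by
      by_contra! hge
      refine Nat.find_spec hex ?_
      have := two_pow_sub (Nat.find hex)
      have e : min (2 ^ Nat.find hex) (n - (2 ^ Nat.find hex - 1)) = 0 := by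
        rw [Nat.sub_eq_zero_of_le (hge.trans this)]; simp
      rw [TLeg, e]
      exact leg_zero hX x _
    have := Finset.single_le_sum hnn (Finset.mem_range.2 hlt)
    rwa [if_pos hb] at this

lemma bad_zero [Nonempty A] (P : Pot X₀ a φ) (β : ℝ) (hβ : 0 ≤ β) (k : ℕ) :
    (∑ w : Fin (1 + k) → A, if w ∈ Bad X₀ (1 + k) 0 then Real.exp (- β * psi φ (1 + k) w) else 0)
      ≤ Fintype.card A * Real.exp (- β * a 0) * ZZ φ β k := by
  have := run_bound P β hβ 1 k (Bad X₀ (1 + k) 0) Set.univ (a 0) (by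
    rintro x ⟨y, hy, -, hb⟩
    refine ⟨Set.mem_univ _, ?_⟩
    rw [tleg_congr hy, TLeg] at hb
    have e : min (2 ^ 0) (1 + k - (2 ^ 0 - 1)) = 0 + 1 := by simp
    rw [e] at hb
    have := P.le (k := 0) hb
    simp [SS]; linarith)
  rw [Set.ncard_univ, Nat.card_eq_fintype_card, Fintype.card_fun, Fintype.card_fin, pow_one] at this
  exact this

lemma bad_succ [Nonempty A] (P : Pot X₀ a φ) (β : ℝ) (hβ : 0 ≤ β) (m k : ℕ) :
    (∑ w : Fin (2 ^ m - 1 + k) → A, if w ∈ Bad X₀ (2 ^ m - 1 + k) m then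
        Real.exp (- β * psi φ (2 ^ m - 1 + k) w) else 0)
      ≤ (GG X₀ (2 ^ m - 1)).ncard *
        Real.exp (- β * ((2 ^ m - 1 : ℕ) * a (3 * (2 ^ m - 1)))) * ZZ φ β k := by
  refine run_bound P β hβ _ k _ _ _ ?_
  rintro x ⟨y, hy, hl, hb⟩
  rw [tleg_congr hy] at hb
  refine ⟨⟨x, rfl, fun i => ?_⟩, ?_⟩
  · by_cases hi : i < m
    · exact leg_sub P.sub ((tleg_congr hy i).1 (hl i hi)) le_rfl (by omega)
    · have : 2 ^ m ≤ 2 ^ i := Nat.pow_le_pow_right (by norm_num) (by omega)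
      have e : min (2 ^ i) (2 ^ m - 1 - (2 ^ i - 1)) = 0 := by
        rw [Nat.sub_eq_zero_of_le (Nat.sub_le_sub_right this 1)]; simp
      rw [TLeg, e]
      exact leg_zero P.sub x _
  · rw [SS]
    have h1 : ∀ i ∈ Finset.range (2 ^ m - 1), a (3 * (2 ^ m - 1)) ≤ - φ (shift1^[i] x) := by
      intro i hi
      have hi := Finset.mem_range.1 hi
      rw [TLeg] at hb
      set len := min (2 ^ m) (2 ^ m - 1 + k - (2 ^ m - 1)) with hlen
      have hll : len ≤ 2 ^ m := by omega
      have h2 : ¬ Leg X₀ (shift1^[i] x) 0 ((2 ^ m - 1 + len - i - 1) + 1) := by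
        rw [leg_shift]
        intro h
        exact hb (leg_sub P.sub h (by omega) (by omega))
      have h3 := P.le h2
      have h4 : a (3 * (2 ^ m - 1)) ≤ a (2 ^ m - 1 + len - i - 1) := P.dec (by omega)
      linarith
    have := Finset.sum_le_sum h1
    simpa using this

lemma ZZ_bound [Nonempty A] (P : Pot X₀ a φ) (β : ℝ) (hβ : 0 ≤ β) (θ D : ℝ) (hθ : 0 ≤ θ)
    (hD : 0 ≤ D)
    (H1 : ∀ n : ℕ, ((GG X₀ n).ncard : ℝ) ≤ D * Real.exp (n * θ))
    (H2 : Fintype.card A * Real.exp (- β * a 0) ≤ 1 / 4)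
    (H3 : ∀ m : ℕ, 1 ≤ m → (GG X₀ (2 ^ m - 1)).ncard *
        Real.exp (- β * ((2 ^ m - 1 : ℕ) * a (3 * (2 ^ m - 1))))
        ≤ 1 / 4 * (1 / 2) ^ m * Real.exp ((2 ^ m - 1 : ℕ) * θ)) (n : ℕ) :
    ZZ φ β n ≤ 2 * D * Real.exp (n * θ) := by
  induction n using Nat.strong_induction_on with
  | _ n ih =>
  have key : ∀ m ∈ Finset.range n,
      (∑ w : Fin n → A, if w ∈ Bad X₀ n m then Real.exp (- β * psi φ n w) else 0)
        ≤ (1 / 2) ^ m * (1 / 4 * (2 * D * Real.exp (n * θ))) := by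
    intro m hm
    have hm := Finset.mem_range.1 hm
    rcases Nat.eq_zero_or_pos m with rfl | hm1
    · obtain ⟨k, rfl⟩ : ∃ k, n = 1 + k := ⟨n - 1, by omega⟩
      refine (bad_zero P β hβ k).trans ?_
      have h1 := ih k (by omega)
      have h2 : Real.exp (k * θ) ≤ Real.exp ((1 + k : ℕ) * θ) := by
        apply Real.exp_le_exp.2; push_cast; nlinarith
      have h3 : ZZ φ β k ≤ 2 * D * Real.exp ((1 + k : ℕ) * θ) := h1.trans (by gcongr)
      rw [pow_zero, one_mul]
      exact mul_le_mul H2 h3 (ZZ_pos β k).le (by norm_num)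
    · by_cases hn : 2 ^ m - 1 ≤ n
      · obtain ⟨k, rfl⟩ : ∃ k, n = 2 ^ m - 1 + k := ⟨n - (2 ^ m - 1), by omega⟩
        refine (bad_succ P β hβ m k).trans ?_
        have := two_pow_sub m
        have h1 := ih k (by omega)
        refine (mul_le_mul (H3 m hm1) h1 (ZZ_pos β k).le (by positivity)).trans (le_of_eq ?_)
        rw [Nat.cast_add, add_mul, Real.exp_add]; ring
      · have : ∀ w : Fin n → A, w ∉ Bad X₀ n m := by
          rintro w ⟨x, hx, -, hb⟩
          refine hb ?_
          have e : min (2 ^ m) (n - (2 ^ m - 1)) = 0 := by omega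
          rw [TLeg, e]
          exact leg_zero P.sub x _
        simp only [this, if_false, Finset.sum_const_zero]
        positivity
  have h1 := ZZ_split P.sub P β hβ n
  have h2 := Finset.sum_le_sum key
  rw [← Finset.sum_mul] at h2
  have h3 : ∑ m ∈ Finset.range n, (1 / 2 : ℝ) ^ m ≤ 2 := sum_geometric_two_le n
  have h4 : (∑ m ∈ Finset.range n, (1 / 2 : ℝ) ^ m) * (1 / 4 * (2 * D * Real.exp (n * θ)))
      ≤ 2 * (1 / 4 * (2 * D * Real.exp (n * θ))) := by gcongr
  linarith [H1 n]

end P4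

section P5

variable {A : Type} [Fintype A] [TopologicalSpace A] [DiscreteTopology A]
  [MeasurableSpace A] [BorelSpace A]
variable {X₀ : Set (Cfg1 A)} {a : ℕ → ℝ} {φ : Cfg1 A → ℝ}

lemma lang_pos (hX : IsSubshift1 X₀) (n : ℕ) : (0 : ℝ) < (lang1 X₀ n).ncard := by
  exact_mod_cast (Set.ncard_pos (Set.toFinite _)).2 (lang_nonempty hX _)

lemma lang_add (hX : IsSubshift1 X₀) (m n : ℕ) :
    (lang1 X₀ (m + n)).ncard ≤ (lang1 X₀ m).ncard * (lang1 X₀ n).ncard := by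
  rw [← Set.ncard_prod]
  refine Set.ncard_le_ncard_of_injOn (Fin.appendEquiv m n).symm ?_
    (Equiv.injective _).injOn (Set.toFinite _)
  rintro w ⟨x, hx, hw⟩
  obtain ⟨⟨u, v⟩, rfl⟩ := (Fin.appendEquiv m n).surjective w
  rw [Equiv.symm_apply_apply]
  refine ⟨⟨x, hx, fun i => ?_⟩, ⟨shift1^[m] x, shift_mem hX x hx m, fun i => ?_⟩⟩
  · have := hw (Fin.castAdd n i)
    simpa [Fin.appendEquiv] using this
  · have := hw (Fin.natAdd m i)
    rw [shift_iter]
    simpa [Fin.appendEquiv, add_comm] using this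

lemma lang_bound (hX : IsSubshift1 X₀) (ε : ℝ) (hε : 0 < ε) :
    ∃ C : ℝ, 1 ≤ C ∧ ∀ r : ℕ, ((lang1 X₀ r).ncard : ℝ) ≤ C * Real.exp (r * (topEnt1 X₀ + ε)) := by
  have hs : Subadditive (fun n => Real.log (lang1 X₀ n).ncard) := by
    intro m n
    have := Real.log_le_log (lang_pos hX (m + n))
      (by exact_mod_cast lang_add hX m n :
        ((lang1 X₀ (m + n)).ncard : ℝ) ≤ (lang1 X₀ m).ncard * (lang1 X₀ n).ncard)
    rwa [Real.log_mul (lang_pos hX m).ne' (lang_pos hX n).ne'] at this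
  have hne : Nonempty {n : ℕ // 1 ≤ n} := ⟨⟨1, le_rfl⟩⟩
  obtain ⟨q, hq⟩ := exists_lt_of_ciInf_lt (show topEnt1 X₀ < topEnt1 X₀ + ε by linarith)
  have hq' : Real.log (lang1 X₀ q.1).ncard / (q.1 : ℝ) < topEnt1 X₀ + ε := by
    rwa [div_eq_inv_mul]
  have hev := hs.eventually_div_lt_of_div_lt (n := q.1) (by have := q.2; omega) hq'
  obtain ⟨N, hN⟩ := eventually_atTop.1 hev
  have hS : ∀ r, 0 ≤ ((lang1 X₀ r).ncard : ℝ) := fun r => by positivity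
  have h0 := topEnt_nonneg X₀
  refine ⟨1 + ∑ r ∈ Finset.range (N + 1), ((lang1 X₀ r).ncard : ℝ), ?_, fun r => ?_⟩
  · linarith [Finset.sum_nonneg (fun r (_ : r ∈ Finset.range (N + 1)) => hS r)]
  · have hnn := Finset.sum_nonneg (fun r (_ : r ∈ Finset.range (N + 1)) => hS r)
    have hexp : 1 ≤ Real.exp (r * (topEnt1 X₀ + ε)) := Real.one_le_exp (by positivity)
    by_cases hr : r ∈ Finset.range (N + 1)
    · have := Finset.single_le_sum (fun r _ => hS r) hr
      nlinarith
    · have hr' : N + 1 ≤ r := by simpa using hr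
      have h1 := hN r (by omega)
      have hr0 : (0 : ℝ) < r := by exact_mod_cast (by omega : 0 < r)
      rw [div_lt_iff₀ hr0, mul_comm] at h1
      have h2 : ((lang1 X₀ r).ncard : ℝ) ≤ Real.exp (r * (topEnt1 X₀ + ε)) := by
        rw [← Real.exp_log (lang_pos hX r)]
        exact Real.exp_le_exp.2 h1.le
      nlinarith

noncomputable def KK (X₀ : Set (Cfg1 A)) (m : ℕ) : ℝ :=
  ∑ i ∈ Finset.range m, (2 : ℝ) ^ i * (((2 : ℝ) ^ i)⁻¹ * Real.log ((lang1 X₀ (2 ^ i)).ncard)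
              - topEnt1 X₀)

lemma KK_nonneg (X₀ : Set (Cfg1 A)) (m : ℕ) : 0 ≤ KK X₀ m := by
  refine Finset.sum_nonneg fun i _ => mul_nonneg (by positivity) ?_
  have := topEnt_le X₀ (2 ^ i) Nat.one_le_two_pow
  push_cast at this
  rw [sub_nonneg, inv_mul_eq_div, le_div_iff₀ (by positivity), mul_comm]
  exact this

lemma cast_two_pow (m : ℕ) : ((2 ^ m - 1 : ℕ) : ℝ) = 2 ^ m - 1 := by
  rw [Nat.cast_sub Nat.one_le_two_pow]; simp

lemma KK_eq (X₀ : Set (Cfg1 A)) (m : ℕ) :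
    ∑ i ∈ Finset.range m, Real.log (lang1 X₀ (2 ^ i)).ncard
      = KK X₀ m + (2 ^ m - 1 : ℕ) * topEnt1 X₀ := by
  induction m with
  | zero => simp [KK]
  | succ m ih =>
    have : KK X₀ (m + 1) = KK X₀ m + (Real.log ((lang1 X₀ (2 ^ m)).ncard)
        - 2 ^ m * topEnt1 X₀) := by
      rw [KK, Finset.sum_range_succ, KK]
      congr 1
      field_simp
    rw [Finset.sum_range_succ, ih, this, cast_two_pow, cast_two_pow, pow_succ]
    ring

lemma KK_le (ha : ∀ j : ℕ, 1 ≤ j →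
      2 * Real.log j / j
        + (j : ℝ)⁻¹ * ∑ i ∈ Finset.range (Nat.log 2 j + 1),
            (2 : ℝ) ^ i * (((2 : ℝ) ^ i)⁻¹ * Real.log ((lang1 X₀ (2 ^ i)).ncard)
              - topEnt1 X₀)
        + (j : ℝ)⁻¹ ≤ a (3 * j)) (m : ℕ) (hm : 1 ≤ m) :
    2 * Real.log (2 ^ m - 1 : ℕ) + KK X₀ m + 1 ≤ (2 ^ m - 1 : ℕ) * a (3 * (2 ^ m - 1)) := by
  obtain ⟨k, rfl⟩ : ∃ k, m = k + 1 := ⟨m - 1, by omega⟩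
  have hk := Nat.one_le_two_pow (n := k)
  have h1 : 1 ≤ 2 ^ (k + 1) - 1 := by rw [pow_succ]; omega
  have hl : Nat.log 2 (2 ^ (k + 1) - 1) = k := by
    refine (Nat.log_eq_iff (Or.inr ⟨by norm_num, by omega⟩)).2 ⟨?_, ?_⟩
    · rw [pow_succ]; omega
    · omega
  have h := ha _ h1
  rw [hl] at h
  change _ + _ * KK X₀ (k + 1) + _ ≤ _ at h
  have hj : (0 : ℝ) < (2 ^ (k + 1) - 1 : ℕ) := by exact_mod_cast h1
  have h2 := mul_le_mul_of_nonneg_left h hj.le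
  refine le_trans (le_of_eq ?_) h2
  field_simp

lemma GG_le (hX : IsSubshift1 X₀) (m : ℕ) :
    ((GG X₀ (2 ^ m - 1)).ncard : ℝ) ≤ Real.exp (KK X₀ m + (2 ^ m - 1 : ℕ) * topEnt1 X₀) := by
  rw [← KK_eq]; exact GG_card_pow hX m

lemma H3_holds (P : Pot X₀ a φ) (hK : ∀ m : ℕ, 1 ≤ m →
    2 * Real.log (2 ^ m - 1 : ℕ) + KK X₀ m + 1 ≤ (2 ^ m - 1 : ℕ) * a (3 * (2 ^ m - 1)))
    (β : ℝ) (hβ : 1 ≤ β) (hβ8 : Real.exp (-β) ≤ 1 / 8) (θ : ℝ) (hθ : topEnt1 X₀ ≤ θ)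
    (m : ℕ) (hm : 1 ≤ m) :
    (GG X₀ (2 ^ m - 1)).ncard *
        Real.exp (- β * ((2 ^ m - 1 : ℕ) * a (3 * (2 ^ m - 1))))
        ≤ 1 / 4 * (1 / 2) ^ m * Real.exp ((2 ^ m - 1 : ℕ) * θ) := by
  have h1 := GG_le P.sub m
  have h2 := hK m hm
  have h3 := KK_nonneg X₀ m
  have hj1 : 1 ≤ 2 ^ m - 1 := hm.trans (two_pow_sub m)
  set j : ℕ := 2 ^ m - 1 with hj
  have hj1' : (1 : ℝ) ≤ j := by exact_mod_cast hj1
  have hl : 0 ≤ Real.log j := Real.log_nonneg hj1'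
  have hjm : (j : ℝ) = 2 ^ m - 1 := cast_two_pow m
  have h4 : (j : ℝ)⁻¹ ≤ 2 * (1 / 2) ^ m := by
    rw [one_div, inv_pow, ← div_eq_mul_inv, le_div_iff₀ (by positivity), inv_mul_le_iff₀ (by linarith)]
    linarith
  calc ((GG X₀ j).ncard : ℝ) * Real.exp (- β * (j * a (3 * j)))
      ≤ Real.exp (KK X₀ m + j * topEnt1 X₀) * Real.exp (- β * (j * a (3 * j))) := by gcongr
    _ ≤ Real.exp (j * θ + - Real.log j + - β) := by
        rw [← Real.exp_add]
        apply Real.exp_le_exp.2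
        have : β * (2 * Real.log j + KK X₀ m + 1) ≤ β * (j * a (3 * j)) := by gcongr
        nlinarith [mul_nonneg (sub_nonneg.2 hβ) h3, mul_nonneg (sub_nonneg.2 hβ) hl]
    _ = Real.exp (j * θ) * (j : ℝ)⁻¹ * Real.exp (-β) := by
        rw [Real.exp_add, Real.exp_add, Real.exp_neg (Real.log j), Real.exp_log (by linarith)]
    _ ≤ Real.exp (j * θ) * (2 * (1 / 2) ^ m) * (1 / 8) := by gcongr
    _ = _ := by ring

lemma H1_holds (P : Pot X₀ a φ) (hK : ∀ m : ℕ, 1 ≤ m →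
    2 * Real.log (2 ^ m - 1 : ℕ) + KK X₀ m + 1 ≤ (2 ^ m - 1 : ℕ) * a (3 * (2 ^ m - 1)))
    (ε : ℝ) (hε : 0 < ε) :
    ∃ D : ℝ, 1 ≤ D ∧ ∀ n : ℕ, ((GG X₀ n).ncard : ℝ) ≤ D * Real.exp (n * (topEnt1 X₀ + ε)) := by
  obtain ⟨C, hC1, hC⟩ := lang_bound P.sub ε hε
  obtain ⟨J, hJ⟩ := eventually_atTop.1 (P.lim.eventually (gt_mem_nhds hε))
  have ha0 : 0 < a 0 := P.pos 0
  have hKb : ∀ m, KK X₀ m ≤ (2 ^ m - 1 : ℕ) * ε + J * a 0 := by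
    intro m
    rcases Nat.eq_zero_or_pos m with rfl | hm
    · simp [KK]; positivity
    have h2 := hK m hm
    have hj1 : 1 ≤ 2 ^ m - 1 := Nat.le_trans hm (two_pow_sub m)
    set j : ℕ := 2 ^ m - 1 with hj
    have hl : 0 ≤ Real.log j := Real.log_nonneg (by exact_mod_cast hj1)
    by_cases hjJ : J ≤ 3 * j
    · have := (hJ _ hjJ).le
      have : j * a (3 * j) ≤ j * ε := by gcongr
      have : 0 ≤ J * a 0 := by positivity
      linarith
    · have h5 : a (3 * j) ≤ a 0 := P.dec (Nat.zero_le _)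
      have h6 : (j : ℝ) ≤ J := by exact_mod_cast (by omega : j ≤ J)
      have : j * a (3 * j) ≤ J * a 0 := mul_le_mul h6 h5 (P.pos _).le (by positivity)
      have : 0 ≤ j * ε := by positivity
      linarith
  refine ⟨C * Real.exp (J * a 0), ?_, fun n => ?_⟩
  · have : 1 ≤ Real.exp (J * a 0) := Real.one_le_exp (by positivity)
    nlinarith
  · obtain ⟨m, r, hr, rfl⟩ : ∃ m r, r ≤ 2 ^ m ∧ n = 2 ^ m - 1 + r := by
      have h1 := Nat.pow_log_le_self 2 (show n + 1 ≠ 0 by omega)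
      have h2 := Nat.lt_pow_succ_log_self (b := 2) (by norm_num) (n + 1)
      have h3 := Nat.one_le_two_pow (n := Nat.log 2 (n + 1))
      rw [pow_succ] at h2
      exact ⟨Nat.log 2 (n + 1), n + 1 - 2 ^ Nat.log 2 (n + 1), by omega, by omega⟩
    have h1 := GG_card P.sub m r hr
    have h2 := GG_le P.sub m
    have h3 := hKb m
    calc ((GG X₀ (2 ^ m - 1 + r)).ncard : ℝ)
        ≤ (GG X₀ (2 ^ m - 1)).ncard * (lang1 X₀ r).ncard := by exact_mod_cast h1
      _ ≤ Real.exp ((2 ^ m - 1 : ℕ) * ε + J * a 0 + (2 ^ m - 1 : ℕ) * topEnt1 X₀) *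
          (C * Real.exp (r * (topEnt1 X₀ + ε))) := by
        refine mul_le_mul (h2.trans (Real.exp_le_exp.2 (by linarith))) (hC r) (by positivity)
          (by positivity)
      _ = _ := by
        rw [Real.exp_add, Real.exp_add, Nat.cast_add, add_mul, mul_add (((2 ^ m - 1 : ℕ)) : ℝ),
          Real.exp_add, Real.exp_add]
        ring

end P5

section P6

variable {A : Type} [Fintype A] [TopologicalSpace A] [DiscreteTopology A]
  [MeasurableSpace A] [BorelSpace A]
variable {X₀ : Set (Cfg1 A)} {a : ℕ → ℝ} {φ : Cfg1 A → ℝ}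

lemma Pot.integrable (P : Pot X₀ a φ) (μ : Measure (Cfg1 A)) [IsProbabilityMeasure μ] :
    Integrable φ μ :=
  Integrable.of_bound P.cont.aestronglyMeasurable (a 0) (ae_of_all _ P.bound)

lemma Pot.int_nonpos (P : Pot X₀ a φ) (μ : Measure (Cfg1 A)) : ∫ x, φ x ∂μ ≤ 0 :=
  integral_nonpos P.nonpos

lemma Pot.int_ge (P : Pot X₀ a φ) (μ : Measure (Cfg1 A)) [IsProbabilityMeasure μ] :
    - a 0 ≤ ∫ x, φ x ∂μ := by
  have := norm_integral_le_of_norm_le_const (μ := μ) (ae_of_all _ P.bound)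
  simp only [probReal_univ, mul_one, Real.norm_eq_abs] at this
  exact (abs_le.1 this).1

lemma int_SS (P : Pot X₀ a φ) (μ : Measure (Cfg1 A)) [IsProbabilityMeasure μ]
    (hμ : Invariant1 μ) (n : ℕ) :
    Integrable (SS φ n) μ ∧ ∫ x, SS φ n x ∂μ = - (n * ∫ x, φ x ∂μ) := by
  have mp : MeasurePreserving (shift1 : Cfg1 A → Cfg1 A) μ μ := ⟨measurable_shift, hμ⟩
  have hi : ∀ i : ℕ, Integrable (fun x => - φ (shift1^[i] x)) μ := fun i =>
    ((mp.iterate i).integrable_comp_of_integrable (P.integrable μ)).neg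
  have he : ∀ i : ℕ, ∫ x, φ (shift1^[i] x) ∂μ = ∫ x, φ x ∂μ := by
    intro i
    have h := (mp.iterate i).map_eq
    conv_rhs => rw [← h]
    rw [integral_map (mp.iterate i).measurable.aemeasurable P.cont.aestronglyMeasurable]
  refine ⟨integrable_finsetSum _ fun i _ => hi i, ?_⟩
  simp only [SS]
  rw [integral_finsetSum _ fun i _ => hi i]
  simp [integral_neg, he]

lemma int_psi (μ : Measure (Cfg1 A)) [IsProbabilityMeasure μ] (n : ℕ) (g : (Fin n → A) → ℝ) :
    ∫ x, g (blk 0 n x) ∂μ = ∑ w, μ.real (blk 0 n ⁻¹' {w}) * g w := by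
  have : IsProbabilityMeasure (μ.map (blk 0 n)) :=
    Measure.isProbabilityMeasure_map (measurable_blk 0 n).aemeasurable
  rw [← integral_map (φ := blk 0 n) (f := g) (measurable_blk 0 n).aemeasurable
    (continuous_of_discreteTopology.aestronglyMeasurable),
    integral_fintype (Integrable.of_finite)]
  refine Finset.sum_congr rfl fun w _ => ?_
  rw [smul_eq_mul, measureReal_def, Measure.map_apply (measurable_blk 0 n)
    (measurableSet_singleton w), measureReal_def]

lemma HH_ZZ [Nonempty A] (P : Pot X₀ a φ) (μ : Measure (Cfg1 A)) [IsProbabilityMeasure μ]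
    (hμ : Invariant1 μ) (β : ℝ) (hβ : 0 ≤ β) (n : ℕ) :
    HH μ 0 n + β * (n * ∫ x, φ x ∂μ) ≤ Real.log (ZZ φ β n) := by
  have g := gibbs (fun w => μ.real (blk 0 n ⁻¹' {w})) (fun w => Real.exp (- β * psi φ n w))
    (fun _ => measureReal_nonneg) (fun _ => (Real.exp_pos _).le)
    (fun w h => absurd h (Real.exp_pos _).ne') (part_sum_one μ 0 n) (ZZ φ β n) le_rfl
  have e : ∑ w, μ.real (blk 0 n ⁻¹' {w}) * Real.log (Real.exp (- β * psi φ n w))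
      = - β * ∫ x, psi φ n (blk 0 n x) ∂μ := by
    rw [int_psi, Finset.mul_sum]
    refine Finset.sum_congr rfl fun w _ => ?_
    rw [Real.log_exp]; ring
  rw [e] at g
  obtain ⟨hi, hs⟩ := int_SS P μ hμ n
  have hpi : Integrable (fun x => psi φ n (blk 0 n x)) μ := by
    have hc : Continuous (fun x : Cfg1 A => psi φ n (blk 0 n x)) :=
      (continuous_of_discreteTopology (f := psi φ n)).comp (continuous_blk 0 n)
    obtain ⟨C, hC⟩ := isCompact_univ.exists_bound_of_continuousOn hc.continuousOn
    exact Integrable.of_bound hc.aestronglyMeasurable C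
      (ae_of_all _ fun x => hC x (Set.mem_univ x))
  have h1 : ∫ x, psi φ n (blk 0 n x) ∂μ ≤ - (n * ∫ x, φ x ∂μ) := by
    rw [← hs]; exact integral_mono hpi hi fun x => psi_le P n x
  have h2 := mul_le_mul_of_nonneg_left h1 hβ
  change HH μ 0 n + _ ≤ _ at g
  linarith

def Fr (X₀ : Set (Cfg1 A)) (φ : Cfg1 A → ℝ) : Set ℝ :=
  {β | ∀ μ : Measure (Cfg1 A), IsProbabilityMeasure μ → Invariant1 μ →
    entropy1 μ + β * ∫ x, φ x ∂μ ≤ topEnt1 X₀}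

lemma Fr_nonempty [Nonempty A] (P : Pot X₀ a φ) (hK : ∀ m : ℕ, 1 ≤ m →
    2 * Real.log (2 ^ m - 1 : ℕ) + KK X₀ m + 1 ≤ (2 ^ m - 1 : ℕ) * a (3 * (2 ^ m - 1))) :
    (Fr X₀ φ).Nonempty := by
  have t1 : Tendsto (fun β : ℝ => Real.exp (-β)) atTop (𝓝 0) := Real.tendsto_exp_neg_atTop_nhds_zero
  have t2 : Tendsto (fun β : ℝ => Fintype.card A * Real.exp (-β * a 0)) atTop (𝓝 0) := by
    have h : Tendsto (fun β : ℝ => β * a 0) atTop atTop :=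
      tendsto_id.atTop_mul_const (P.pos 0)
    have := (t1.comp h).const_mul (Fintype.card A : ℝ)
    simpa [Function.comp_def] using this
  obtain ⟨β, h1, h2, hβ⟩ := ((t1.eventually (ge_mem_nhds (by norm_num : (0 : ℝ) < 1 / 8))).and
    ((t2.eventually (ge_mem_nhds (by norm_num : (0 : ℝ) < 1 / 4))).and
      (eventually_ge_atTop 1))).exists
  refine ⟨β, fun μ hμp hμ => ?_⟩
  have h0 := topEnt_nonneg X₀
  refine le_of_forall_pos_le_add fun ε hε => ?_
  obtain ⟨D, hD, H1⟩ := H1_holds P hK ε hε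
  have hb := ZZ_bound P β (by linarith) (topEnt1 X₀ + ε) D (by linarith) (by linarith) H1 h2
    (H3_holds P hK β hβ h1 _ (by linarith))
  have hall : ∀ n : ℕ, 1 ≤ n → entropy1 μ + β * ∫ x, φ x ∂μ ≤
      Real.log (2 * D) / n + (topEnt1 X₀ + ε) := by
    intro n hn
    have hn' : (0 : ℝ) < n := by exact_mod_cast hn
    have g1 := entropy_le μ n hn
    rw [inv_mul_eq_div, le_div_iff₀ hn'] at g1
    have g2 := HH_ZZ P μ hμ β (by linarith) n
    have g3 := Real.log_le_log (ZZ_pos β n) (hb n)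
    rw [Real.log_mul (by linarith) (Real.exp_pos _).ne', Real.log_exp] at g3
    rw [← sub_le_iff_le_add, le_div_iff₀ hn']
    nlinarith
  have t3 : Tendsto (fun n : ℕ => Real.log (2 * D) / n + (topEnt1 X₀ + ε)) atTop
      (𝓝 (0 + (topEnt1 X₀ + ε))) :=
    (tendsto_const_div_atTop_nhds_zero_nat _).add_const _
  rw [zero_add] at t3
  exact ge_of_tendsto t3 (eventually_atTop.2 ⟨1, hall⟩)

lemma Fr_up (P : Pot X₀ a φ) {β β' : ℝ} (h : β ∈ Fr X₀ φ) (hb : β ≤ β') : β' ∈ Fr X₀ φ := by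
  intro μ hp hi
  have := h μ hp hi
  have h2 := P.int_nonpos μ
  nlinarith

lemma topEnt_lt [Nonempty A] (hX : IsSubshift1 X₀) (hne : X₀ ≠ Set.univ) :
    topEnt1 X₀ < Real.log (Fintype.card A) := by
  obtain ⟨x, hx⟩ := (Set.ne_univ_iff_exists_notMem _).1 hne
  obtain ⟨k, hk⟩ := exists_not_leg hX hx
  have hk1 : 1 ≤ k := by
    rcases Nat.eq_zero_or_pos k with rfl | h
    · exact absurd (leg_zero hX x 0) hk
    · exact h
  have h1 := topEnt_le X₀ k hk1
  have h2 : (lang1 X₀ k).ncard < Fintype.card A ^ k := by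
    have h3 : lang1 X₀ k ⊂ Set.univ := Set.ssubset_univ_iff.2
      (fun h => hk (by rw [Leg, h]; exact Set.mem_univ _))
    have := Set.ncard_lt_ncard h3 (Set.toFinite _)
    rwa [Set.ncard_univ, Nat.card_eq_fintype_card, Fintype.card_fun, Fintype.card_fin] at this
  have h3 : Real.log (lang1 X₀ k).ncard < Real.log ((Fintype.card A : ℝ) ^ k) :=
    Real.log_lt_log (lang_pos hX k) (by exact_mod_cast h2)
  rw [Real.log_pow] at h3
  have hk' : (0 : ℝ) < k := by exact_mod_cast hk1
  exact lt_of_mul_lt_mul_left (h1.trans_lt h3) hk'.le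

lemma topEnt_univ [Nonempty A] : topEnt1 (Set.univ : Set (Cfg1 A)) = Real.log (Fintype.card A) := by
  have hne : Nonempty {n : ℕ // 1 ≤ n} := ⟨⟨1, le_rfl⟩⟩
  have h : ∀ n : {n : ℕ // 1 ≤ n}, (n.1 : ℝ)⁻¹ * Real.log ((lang1 (Set.univ : Set (Cfg1 A)) n.1).ncard)
      = Real.log (Fintype.card A) := by
    intro n
    have : lang1 (Set.univ : Set (Cfg1 A)) n.1 = Set.univ := by
      refine Set.eq_univ_of_forall fun w => ?_
      obtain ⟨x, hx⟩ := blk_surj n.1 w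
      exact ⟨x, Set.mem_univ _, fun i => by rw [← hx]; simp [blk]⟩
    rw [this, Set.ncard_univ, Nat.card_eq_fintype_card, Fintype.card_fun, Fintype.card_fin,
      Nat.cast_pow, Real.log_pow]
    have : (n.1 : ℝ) ≠ 0 := by have := n.2; exact_mod_cast (by omega : n.1 ≠ 0)
    field_simp
  rw [topEnt1]
  simp only [h]
  exact ciInf_const

lemma Fr_lower [Nonempty A] (P : Pot X₀ a φ) {β : ℝ} (h : β ∈ Fr X₀ φ)
    (hne : X₀ ≠ Set.univ) :
    (Real.log (Fintype.card A) - topEnt1 X₀) / a 0 ≤ β := by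
  obtain ⟨μ, hp, hi, -, he⟩ := mme_exists (X₀ := (Set.univ : Set (Cfg1 A)))
    ⟨⟨fun _ => Classical.arbitrary A, Set.mem_univ _⟩, isClosed_univ, fun _ _ => Set.mem_univ _⟩
  have h1 := h μ hp hi
  rw [he, topEnt_univ] at h1
  have h2 := topEnt_lt P.sub hne
  have h3 := P.int_nonpos μ
  have h4 := P.int_ge μ
  have h5 := P.pos 0
  rw [div_le_iff₀ h5]
  rcases le_or_gt 0 β with hb | hb
  · nlinarith
  · nlinarith

lemma mme_int (P : Pot X₀ a φ) {μ : Measure (Cfg1 A)} (h : IsMME1 X₀ μ) : ∫ x, φ x ∂μ = 0 := by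
  obtain ⟨hp, -, h1, -⟩ := h
  have h0 : μ X₀ᶜ = 0 := (prob_compl_eq_zero_iff P.sub.2.1.measurableSet).2 h1
  refine integral_eq_zero_of_ae ?_
  filter_upwards [measure_eq_zero_iff_ae_notMem.1 h0] with x hx
  exact P.h0 x (by simpa using hx)

lemma full_of_int (P : Pot X₀ a φ) (μ : Measure (Cfg1 A)) [IsProbabilityMeasure μ]
    (h : ∫ x, φ x ∂μ = 0) : μ X₀ = 1 := by
  have h1 : ∫ x, - φ x ∂μ = 0 := by rw [integral_neg, h, neg_zero]
  have h2 := (integral_eq_zero_iff_of_nonneg (fun x => by simpa using P.nonpos x)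
    (P.integrable μ).neg).1 h1
  refine (prob_compl_eq_zero_iff P.sub.2.1.measurableSet).1 ?_
  refine measure_eq_zero_iff_ae_notMem.2 ?_
  filter_upwards [h2] with x hx
  have : φ x = 0 := by simpa using hx
  simpa using P.mem_of_zero this

lemma press_bdd (P : Pot X₀ a φ) (β : ℝ) : BddAbove { r | ∃ μ : Measure (Cfg1 A),
    IsProbabilityMeasure μ ∧ Invariant1 μ ∧ r = entropy1 μ + β * ∫ x, φ x ∂μ } := by
  refine ⟨Real.log (Fintype.card A) + |β| * a 0, ?_⟩
  rintro _ ⟨μ, hp, -, rfl⟩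
  have h1 := entropy_le μ 1 le_rfl
  have h2 := HH_le μ 0 1
  have h3 : β * ∫ x, φ x ∂μ ≤ |β| * a 0 := by
    refine (le_abs_self _).trans ?_
    rw [abs_mul]
    refine mul_le_mul_of_nonneg_left ?_ (abs_nonneg _)
    rw [abs_le]
    exact ⟨P.int_ge μ, (P.int_nonpos μ).trans (P.pos 0).le⟩
  simp only [Nat.cast_one, inv_one, one_mul] at h1 h2
  linarith

lemma press_ge (P : Pot X₀ a φ) (β : ℝ) (μ : Measure (Cfg1 A)) (hp : IsProbabilityMeasure μ)
    (hi : Invariant1 μ) : entropy1 μ + β * ∫ x, φ x ∂μ ≤ pressure1 φ β :=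
  le_csSup (press_bdd P β) ⟨μ, hp, hi, rfl⟩

lemma press_eq (P : Pot X₀ a φ) {β : ℝ} (h : β ∈ Fr X₀ φ) : pressure1 φ β = topEnt1 X₀ := by
  obtain ⟨μ, hμ⟩ := mme_exists P.sub
  refine le_antisymm (csSup_le ⟨_, μ, hμ.1, hμ.2.1, rfl⟩ ?_) ?_
  · rintro _ ⟨ν, hp, hi, rfl⟩; exact h ν hp hi
  · have := press_ge P β μ hμ.1 hμ.2.1
    rwa [mme_int P hμ, mul_zero, add_zero, hμ.2.2.2] at this

lemma ES_eq (P : Pot X₀ a φ) {β β' : ℝ} (h : β' ∈ Fr X₀ φ) (hb : β' < β) :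
    ES1 φ β = {μ | IsMME1 X₀ μ} := by
  have hF := Fr_up P h hb.le
  ext μ
  constructor
  · rintro ⟨hp, hi, he⟩
    rw [press_eq P hF] at he
    have h1 := h μ hp hi
    have h2 := P.int_nonpos μ
    have h3 : ∫ x, φ x ∂μ = 0 := by
      refine le_antisymm h2 ?_
      nlinarith
    refine ⟨hp, hi, full_of_int P μ h3, ?_⟩
    rw [h3] at he; linarith
  · intro hμ
    refine ⟨hμ.1, hμ.2.1, ?_⟩
    rw [press_eq P hF, mme_int P hμ, hμ.2.2.2]; ring

lemma mme_limit (P : Pot X₀ a φ) (μs : ℕ → Measure (Cfg1 A)) (μ : Measure (Cfg1 A))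
    [IsProbabilityMeasure μ] (hi : Invariant1 μ) (hm : ∀ᶠ k in atTop, IsMME1 X₀ (μs k))
    (ht : ∀ f : Cfg1 A → ℝ, Continuous f →
          Tendsto (fun k => ∫ x, f x ∂(μs k)) atTop (𝓝 (∫ x, f x ∂μ))) : IsMME1 X₀ μ := by
  have h0 : ∫ x, φ x ∂μ = 0 := by
    refine tendsto_nhds_unique (ht φ P.cont) (tendsto_const_nhds.congr' ?_)
    filter_upwards [hm] with k hk
    exact (mme_int P hk).symm
  have hfull := full_of_int P μ h0
  have hcyl : ∀ k (u : Fin k → A), Tendsto (fun n => (μs n).real (blk 0 k ⁻¹' {u})) atTop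
      (𝓝 (μ.real (blk 0 k ⁻¹' {u}))) := by
    intro k u
    have hc := ht (Set.indicator (blk 0 k ⁻¹' {u}) (fun _ => (1 : ℝ)))
      (continuous_const.indicator (fun x hx => by
        rw [(isClopen_blk 0 k u).frontier_eq] at hx; exact absurd hx (Set.notMem_empty _)))
    simpa [integral_indicator_const, meas_blk] using hc
  refine ⟨inferInstance, hi, hfull, le_antisymm (entropy_le_top P.sub.2.1 μ hfull) ?_⟩
  refine le_entropy μ _ fun n hn => ?_
  refine ge_of_tendsto (tendsto_HH hcyl n) ?_
  filter_upwards [hm] with k hk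
  have := hk.1
  have h1 := entropy_le (μs k) n hn
  have hn' : (0 : ℝ) < n := by exact_mod_cast hn
  rw [hk.2.2.2, inv_mul_eq_div, le_div_iff₀ hn', mul_comm] at h1
  exact h1

lemma main [Nonempty A] (P : Pot X₀ a φ) (hne : X₀ ≠ Set.univ) (hK : ∀ m : ℕ, 1 ≤ m →
    2 * Real.log (2 ^ m - 1 : ℕ) + KK X₀ m + 1 ≤ (2 ^ m - 1 : ℕ) * a (3 * (2 ^ m - 1))) :
    ∃ βc : ℝ, 0 < βc ∧ FreezingPT1 φ βc ∧ ZTA1 φ = { μ | IsMME1 X₀ μ } := by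
  have hFn := Fr_nonempty P hK
  have hlow : ∀ β ∈ Fr X₀ φ, (Real.log (Fintype.card A) - topEnt1 X₀) / a 0 ≤ β :=
    fun β h => Fr_lower P h hne
  have hbdd : BddBelow (Fr X₀ φ) := ⟨_, hlow⟩
  have hES : ∀ β, sInf (Fr X₀ φ) < β → ES1 φ β = {μ | IsMME1 X₀ μ} := by
    intro β hβ
    obtain ⟨β', h1, h2⟩ := exists_lt_of_csInf_lt hFn hβ
    exact ES_eq P h1 h2
  refine ⟨sInf (Fr X₀ φ), ?_, ⟨?_, ?_⟩, ?_⟩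
  · refine lt_of_lt_of_le ?_ (le_csInf hFn hlow)
    exact div_pos (by linarith [topEnt_lt P.sub hne]) (P.pos 0)
  · intro β β' h h'
    rw [hES β h, hES β' h']
  · intro β β' h h' heq
    rw [hES β' h'] at heq
    obtain ⟨μ, hμ⟩ := mme_exists P.sub
    have hm : μ ∈ ES1 φ β := by rw [heq]; exact hμ
    have h1 := hm.2.2
    rw [mme_int P hμ, mul_zero, add_zero, hμ.2.2.2] at h1
    refine absurd (csInf_le hbdd (fun ν hp hi => ?_ : β ∈ Fr X₀ φ)) (not_le.2 h)
    rw [h1]; exact press_ge P β ν hp hi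
  · ext μ
    constructor
    · rintro ⟨hp, hi, β, μs, hβ, hm, ht⟩
      refine mme_limit P μs μ hi ?_ ht
      filter_upwards [hβ.eventually (eventually_gt_atTop (sInf (Fr X₀ φ)))] with k hk
      have := hm k
      rwa [hES _ hk] at this
    · intro hμ
      refine ⟨hμ.1, hμ.2.1, fun k => sInf (Fr X₀ φ) + 1 + k, fun _ => μ, ?_, fun k => ?_, ?_⟩
      · exact tendsto_atTop_add_const_left _ _ tendsto_natCast_atTop_atTop
      · rw [hES _ (by have : (0 : ℝ) ≤ k := by positivity
                      linarith)]
        exact hμ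
      · intro f _; exact tendsto_const_nhds

end P6

/-- **Theorem 5.3, one-sided subshifts.** Let `X₀⁺` be a proper subshift of
`X⁺ = 𝒜^ℕ`, `κ_i = 2^{-i} log |L_{2^i}(X₀⁺)| - h_top(X₀⁺)`, and `(a_j)` a decreasing positive
null sequence with `a_{3j} ≥ (2 log j)/j + (1/j) Σ_{i ≤ ⌊log₂ j⌋} 2^i κ_i + 1/j`. Then the
potential `φ⁺` (vanishing on `X₀⁺`, equal to `-a_j` where `dist(x, X₀⁺) = 2^{-j}`) has a
freezing phase transition at some `β_c > 0`, and `ZTA(φ⁺)` is the set of measures of maximal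
entropy of `X₀⁺`. -/
theorem statement12 (A : Type) [Fintype A] [TopologicalSpace A] [DiscreteTopology A]
    [MeasurableSpace A] [BorelSpace A]
    (X₀ : Set (Cfg1 A)) (hsub : IsSubshift1 X₀) (hproper : X₀ ≠ Set.univ)
    (a : ℕ → ℝ) (hpos : ∀ j, 0 < a j) (hdec : Antitone a)
    (hlim : Tendsto a atTop (𝓝 0))
    (ha : ∀ j : ℕ, 1 ≤ j →
      2 * Real.log j / j
        + (j : ℝ)⁻¹ * ∑ i ∈ Finset.range (Nat.log 2 j + 1),
            (2 : ℝ) ^ i * (((2 : ℝ) ^ i)⁻¹ * Real.log ((lang1 X₀ (2 ^ i)).ncard)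
              - topEnt1 X₀)
        + (j : ℝ)⁻¹ ≤ a (3 * j))
    (φ : Cfg1 A → ℝ)
    (hφ0 : ∀ x ∈ X₀, φ x = 0)
    (hφ1 : ∀ x ∉ X₀, ∀ j : ℕ, distToSub1 X₀ x = (2 : ℝ) ^ (-(j : ℤ)) → φ x = -(a j)) :
    ∃ βc : ℝ, 0 < βc ∧ FreezingPT1 φ βc ∧ ZTA1 φ = { μ | IsMME1 X₀ μ } := by
  have P : Pot X₀ a φ := ⟨hsub, hpos, hdec, hlim, hφ0, hφ1⟩
  obtain ⟨x, -⟩ := hsub.1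
  have : Nonempty A := ⟨x 0⟩
  exact main P hproper (KK_le ha)

end Freezing
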